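/- arXiv:math-ph/0306059 — 4 statements merged into one kernel-verified Lean document; each statement's English description precedes it below -/
import Mathlib

section
/- Let n ≥ 1 and r ≥ 1, and let g, g' : Fin r → U(n). If for every word w ∈ FreeGroup(Fin r) the elements w(g) and w(g') are conjugate in U(n), then g and g' are diagonally conjugate, i.e. there exists k ∈ U(n) such that g'(i) = k · g(i) · k⁻¹ for all i. -/
/-!
Conjugate elements have equal traces, so the two tuples define unitary representations of the free
group with the same character, hence two modules over the group algebra with the same trace form.
Both modules are semisimple, since orthogonal complements of invariant subspaces are invariant.

For a simple module `S`, the Jacobson density theorem applied to the direct sum of the two modules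
yields one element of the group algebra that acts on each of them as a projection onto its
`S`-isotypic component. Its two traces are the dimensions of these components, so in characteristic
zero the dimensions agree. Splitting off isomorphic simple summands one at a time shows that the
modules are isomorphic.

Finally, let an invertible `T` intertwine the two representations, and write `T = k * |T|` with `k`
unitary. Then `star T * T` commutes with the first representation, and so does its square root
`|T|`; therefore `k` is itself an intertwiner.
-/

open Module
open scoped MonoidAlgebra

section SemisimpleModule

variable {R M : Type*} [Ring R] [AddCommGroup M] [Module R M]

/-- The scalar `r` acts on `M` as an idempotent with image `N`. This is `LinearMap.IsProj` for
`m ↦ r • m`, which is not `R`-linear when `R` is noncommutative. -/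
structure IsSMulProj (r : R) (N : Submodule R M) : Prop where
  smul_mem : ∀ m : M, r • m ∈ N
  smul_eq_self : ∀ m ∈ N, r • m = m

lemma projection_map_of_isFullyInvariant {N N' : Submodule R M} (hN : N.IsFullyInvariant)
    (hN' : N'.IsFullyInvariant) (hc : IsCompl N N') (φ : End R M) (m : M) :
    N.projection N' hc (φ m) = φ (N.projection N' hc m) := by
  obtain ⟨a, ha, b, hb, rfl⟩ :=
    Submodule.mem_sup.1 (hc.sup_eq_top ▸ Submodule.mem_top : m ∈ N ⊔ N')
  have hleft {x : M} (hx : x ∈ N) : N.projection N' hc x = x :=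
    Submodule.projection_apply_of_mem_left hc hx
  have hright {x : M} (hx : x ∈ N') : N.projection N' hc x = 0 :=
    (Submodule.projection_apply_eq_zero_iff hc).2 hx
  simp only [map_add, hleft ha, hright hb, hleft (hN φ ha), hright (hN' φ hb), map_zero]

variable [IsSemisimpleModule R M]

lemma exists_isFullyInvariant_isCompl {N : Submodule R M} (hN : N.IsFullyInvariant) :
    ∃ N' : Submodule R M, N'.IsFullyInvariant ∧ IsCompl N N' := by
  have : ComplementedLattice (fullyInvariantSubmodule R M) :=
    (OrderIso.setIsotypicComponents (R := R) (M := M)).complementedLattice_iff.1 inferInstance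
  obtain ⟨⟨N', hN'⟩, hc⟩ := exists_isCompl (⟨N, hN⟩ : fullyInvariantSubmodule R M)
  exact ⟨N', hN', disjoint_iff.2 congr(($hc.inf_eq_bot).1),
    codisjoint_iff.2 congr(($hc.sup_eq_top).1)⟩

lemma exists_isSMulProj_of_isFullyInvariant [Module.Finite (End R M) M] {N : Submodule R M}
    (hN : N.IsFullyInvariant) : ∃ r : R, IsSMulProj r N := by
  obtain ⟨N', hN', hc⟩ := exists_isFullyInvariant_isCompl hN
  let p : End (End R M) M :=
    { N.projection N' hc with map_smul' := projection_map_of_isFullyInvariant hN hN' hc }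
  -- This surjectivity is the Jacobson density theorem.
  obtain ⟨r, hr⟩ := Module.Finite.toModuleEnd_moduleEnd_surjective p
  have hsmul (m : M) : r • m = N.projection N' hc m := congr($hr m)
  exact ⟨r, fun m ↦ hsmul m ▸ Submodule.projection_apply_mem hc m,
    fun m hm ↦ (hsmul m).trans (Submodule.projection_apply_of_mem_left hc hm)⟩

variable {M' : Type*} [AddCommGroup M'] [Module R M'] [IsSemisimpleModule R M']

lemma isSemisimpleModule_prod : IsSemisimpleModule R (M × M') := by
  have hsup : IsSemisimpleModule R
      ↥(LinearMap.range (LinearMap.inl R M M') ⊔ LinearMap.range (LinearMap.inr R M M')) :=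
    .sup (.range _) (.range _)
  rw [LinearMap.sup_range_inl_inr] at hsup
  exact .congr Submodule.topEquiv.symm

variable (M M')

lemma exists_isSMulProj_isotypicComponent₂ [Module.Finite (End R (M × M')) (M × M')]
    (S : Type*) [AddCommGroup S] [Module R S] [IsSimpleModule R S] :
    ∃ r : R, IsSMulProj r (isotypicComponent R M S) ∧ IsSMulProj r (isotypicComponent R M' S) := by
  have := isSemisimpleModule_prod (R := R) (M := M) (M' := M')
  obtain ⟨r, hmem, hfix⟩ := exists_isSMulProj_of_isFullyInvariant
    (Submodule.IsFullyInvariant.isotypicComponent R (M × M') S)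
  refine ⟨r, ⟨fun m ↦ ?_, fun m hm ↦ ?_⟩, ⟨fun m ↦ ?_, fun m hm ↦ ?_⟩⟩
  · exact (LinearMap.fst R M M').le_comap_isotypicComponent S (hmem (m, 0))
  · exact congr(($(hfix (m, 0) ((LinearMap.inl R M M').le_comap_isotypicComponent S hm))).1)
  · exact (LinearMap.snd R M M').le_comap_isotypicComponent S (hmem (0, m))
  · exact congr(($(hfix (0, m) ((LinearMap.inr R M M').le_comap_isotypicComponent S hm))).2)

end SemisimpleModule

section ModuleCharacter

variable (K R M : Type*) [Field K] [Ring R] [Algebra K R]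
  [AddCommGroup M] [Module K M] [Module R M] [IsScalarTower K R M]

/-- The character of a module over a `K`-algebra: the `K`-linear form sending a scalar to the
trace of its action. -/
noncomputable def moduleCharacter : R →ₗ[K] K :=
  LinearMap.trace K M ∘ₗ (Algebra.lsmul K K M).toLinearMap

lemma moduleCharacter_one [FiniteDimensional K M] : moduleCharacter K R M 1 = finrank K M := by
  simp [moduleCharacter]

variable {K R M}
variable {M' : Type*} [AddCommGroup M'] [Module K M'] [Module R M'] [IsScalarTower K R M']

lemma moduleCharacter_congr (e : M ≃ₗ[R] M') :
    moduleCharacter K R M = moduleCharacter K R M' := by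
  ext r
  rw [moduleCharacter, moduleCharacter, LinearMap.comp_apply, LinearMap.comp_apply,
    ← LinearMap.trace_conj' _ (e.restrictScalars K)]
  congr 1
  ext m
  simp [LinearEquiv.conj_apply]

variable [FiniteDimensional K M] [FiniteDimensional K M']

instance finiteDimensional_submodule (N : Submodule R M) : FiniteDimensional K N :=
  inferInstanceAs (FiniteDimensional K (N.restrictScalars K))

lemma moduleCharacter_prod :
    moduleCharacter K R (M × M') = moduleCharacter K R M + moduleCharacter K R M' :=
  LinearMap.ext fun r ↦
    LinearMap.trace_prodMap' (Algebra.lsmul K K M r) (Algebra.lsmul K K M' r)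

lemma moduleCharacter_eq_add_of_isCompl {N N' : Submodule R M} (hc : IsCompl N N') :
    moduleCharacter K R M = moduleCharacter K R N + moduleCharacter K R N' := by
  rw [← moduleCharacter_prod, moduleCharacter_congr (N.prodEquivOfIsCompl N' hc)]

lemma IsSMulProj.moduleCharacter_eq_finrank {N : Submodule R M} {r : R} (hr : IsSMulProj r N) :
    moduleCharacter K R M r = finrank K N :=
  have hproj : LinearMap.IsProj (N.restrictScalars K) (Algebra.lsmul K K M r) :=
    ⟨hr.smul_mem, hr.smul_eq_self⟩
  hproj.trace

variable [CharZero K] [IsSemisimpleModule R M] [IsSemisimpleModule R M']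

lemma finrank_isotypicComponent_eq_of_moduleCharacter_eq
    (h : moduleCharacter K R M = moduleCharacter K R M')
    (S : Type*) [AddCommGroup S] [Module R S] [IsSimpleModule R S] :
    finrank K (isotypicComponent R M S) = finrank K (isotypicComponent R M' S) := by
  have : Module.Finite (End R (M × M')) (M × M') := .of_restrictScalars_finite K _ _
  obtain ⟨r, hr, hr'⟩ := exists_isSMulProj_isotypicComponent₂ (R := R) M M' S
  exact_mod_cast
    hr.moduleCharacter_eq_finrank.symm.trans (congr($h r).trans hr'.moduleCharacter_eq_finrank)

lemma exists_nonempty_linearEquiv_of_moduleCharacter_eq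
    (h : moduleCharacter K R M = moduleCharacter K R M') (W : Submodule R M) [IsSimpleModule R W] :
    ∃ W' : Submodule R M', Nonempty (W ≃ₗ[R] W') := by
  have hne : isotypicComponent R M' W ≠ ⊥ := by
    intro hbot
    have hrank := finrank_isotypicComponent_eq_of_moduleCharacter_eq h W
    rw [hbot, finrank_zero_of_subsingleton (M := (⊥ : Submodule R M')), finrank_zero_iff,
      Submodule.subsingleton_iff_eq_bot] at hrank
    exact (bot_lt_isotypicComponent W).ne' hrank
  obtain ⟨W', hle, _⟩ := (IsSemisimpleModule.eq_bot_or_exists_simple_le _).resolve_left hne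
  obtain ⟨e⟩ := isIsotypicOfType_submodule_iff.1
    (IsIsotypicOfType.isotypicComponent R M' W) W' hle
  exact ⟨W', ⟨e.symm⟩⟩

theorem nonempty_linearEquiv_of_moduleCharacter_eq
    (h : moduleCharacter K R M = moduleCharacter K R M') : Nonempty (M ≃ₗ[R] M') := by
  induction hd : finrank K M using Nat.strong_induction_on generalizing M M' with
  | _ d ih =>
  rcases subsingleton_or_nontrivial M with _ | _
  · have hrank : (finrank K M : K) = finrank K M' := by
      rw [← moduleCharacter_one K R M, h, moduleCharacter_one]
    rw [finrank_zero_of_subsingleton, Nat.cast_zero, eq_comm, Nat.cast_eq_zero,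
      finrank_zero_iff] at hrank
    exact ⟨LinearEquiv.ofSubsingleton M M'⟩
  obtain ⟨W, hW⟩ := IsSemisimpleModule.exists_simple_submodule R M
  obtain ⟨W', ⟨e⟩⟩ := exists_nonempty_linearEquiv_of_moduleCharacter_eq h W
  obtain ⟨C, hC⟩ := exists_isCompl W
  obtain ⟨C', hC'⟩ := exists_isCompl W'
  have hchar : moduleCharacter K R C = moduleCharacter K R C' := by
    rwa [moduleCharacter_eq_add_of_isCompl hC, moduleCharacter_eq_add_of_isCompl hC',
      moduleCharacter_congr e, add_right_inj] at h
  have hlt : finrank K C < d := by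
    have : Nontrivial W := IsSimpleModule.nontrivial R W
    rw [← hd, ← ((W.prodEquivOfIsCompl C hC).restrictScalars K).finrank_eq, finrank_prod]
    exact Nat.lt_add_of_pos_left finrank_pos
  obtain ⟨e'⟩ := ih _ hlt hchar rfl
  exact ⟨(W.prodEquivOfIsCompl C hC).symm ≪≫ₗ e.prodCongr e' ≪≫ₗ W'.prodEquivOfIsCompl C' hC'⟩

end ModuleCharacter

section Representation

variable {k G V W : Type*} [Field k] [Monoid G] [AddCommGroup V] [Module k V] [AddCommGroup W]
  [Module k W]

lemma moduleCharacter_asModule_single (ρ : Representation k G V) (g : G) :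
    moduleCharacter k k[G] ρ.asModule (.single g 1) = ρ.character g := by
  have hsmul : Algebra.lsmul k k ρ.asModule (MonoidAlgebra.single g (1 : k)) = ρ g :=
    LinearMap.ext fun v ↦ (ρ.single_smul 1 g v).trans (one_smul k _)
  exact congr(LinearMap.trace k V $hsmul)

theorem nonempty_representationEquiv_of_character_eq [CharZero k] [FiniteDimensional k V]
    [FiniteDimensional k W] {ρ : Representation k G V} {σ : Representation k G W}
    [ρ.IsSemisimpleRepresentation] [σ.IsSemisimpleRepresentation]
    (h : ρ.character = σ.character) : Nonempty (ρ.Equiv σ) := by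
  have hchar : moduleCharacter k k[G] ρ.asModule = moduleCharacter k k[G] σ.asModule :=
    MonoidAlgebra.lhom_ext' fun g ↦ LinearMap.ext_ring <| by
      simp [moduleCharacter_asModule_single, h]
  have : FiniteDimensional k ρ.asModule := inferInstanceAs (FiniteDimensional k V)
  have : FiniteDimensional k σ.asModule := inferInstanceAs (FiniteDimensional k W)
  have : IsSemisimpleModule k[G] ρ.asModule :=
    ρ.isSemisimpleRepresentation_iff_isSemisimpleModule_asModule.1 ‹_›
  have : IsSemisimpleModule k[G] σ.asModule :=
    σ.isSemisimpleRepresentation_iff_isSemisimpleModule_asModule.1 ‹_›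
  obtain ⟨e⟩ := nonempty_linearEquiv_of_moduleCharacter_eq hchar
  let f := (Representation.IntertwiningMap.equivLinearMapAsModule ρ σ).symm e.toLinearMap
  exact ⟨f.ofBijective e.bijective⟩

end Representation

section UnitaryRepresentation

variable {𝕜 : Type*} [RCLike 𝕜]

lemma isSemisimpleRepresentation_of_mem_unitary {Γ E : Type*} [Group Γ]
    [NormedAddCommGroup E] [InnerProductSpace 𝕜 E] [FiniteDimensional 𝕜 E]
    {ρ : Representation 𝕜 Γ E} (hρ : ∀ γ, ρ γ ∈ unitary (E →ₗ[𝕜] E)) :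
    ρ.IsSemisimpleRepresentation := by
  have hadj (γ : Γ) : ρ γ⁻¹ = LinearMap.adjoint (ρ γ) := by
    refine (left_inv_eq_right_inv (Unitary.star_mul_self_of_mem (hρ γ)) ?_).symm
    rw [← map_mul, mul_inv_cancel, map_one]
  refine ⟨fun W ↦ ⟨⟨W.toSubmoduleᗮ, fun γ v hv u hu ↦ ?_⟩, ?_⟩⟩
  · rw [← LinearMap.adjoint_inner_left, ← hadj]
    exact hv _ (W.apply_mem_toSubmodule _ hu)
  · have hc := Submodule.isCompl_orthogonal (K := W.toSubmodule)
    exact ⟨disjoint_iff.2 (Subrepresentation.toSubmodule_injective hc.inf_eq_bot),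
      codisjoint_iff.2 (Subrepresentation.toSubmodule_injective hc.sup_eq_top)⟩

variable {Γ m : Type*} [Monoid Γ] [Fintype m] [DecidableEq m]

/-- The representation of `Γ` on the Euclidean space `𝕜 ^ m` given by unitary matrices. -/
noncomputable def unitaryRepresentation (ρ : Γ →* Matrix.unitaryGroup m 𝕜) :
    Representation 𝕜 Γ (EuclideanSpace 𝕜 m) :=
  ((LinearMap.toMatrixOrthonormal (EuclideanSpace.basisFun m 𝕜)).symm : _ →* _).comp
    ((Matrix.unitaryGroup m 𝕜).subtype.comp ρ)

variable (ρ : Γ →* Matrix.unitaryGroup m 𝕜)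

lemma toMatrixOrthonormal_unitaryRepresentation (γ : Γ) :
    LinearMap.toMatrixOrthonormal (EuclideanSpace.basisFun m 𝕜) (unitaryRepresentation ρ γ) =
      ρ γ :=
  StarAlgEquiv.apply_symm_apply _ _

lemma unitaryRepresentation_mem_unitary (γ : Γ) :
    unitaryRepresentation ρ γ ∈ unitary (EuclideanSpace 𝕜 m →ₗ[𝕜] EuclideanSpace 𝕜 m) :=
  Unitary.map_mem (LinearMap.toMatrixOrthonormal (EuclideanSpace.basisFun m 𝕜)).symm (ρ γ).2

lemma character_unitaryRepresentation (γ : Γ) :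
    (unitaryRepresentation ρ).character γ = (ρ γ : Matrix m m 𝕜).trace := by
  rw [← toMatrixOrthonormal_unitaryRepresentation]
  exact LinearMap.trace_eq_matrix_trace 𝕜 (EuclideanSpace.basisFun m 𝕜).toBasis _

variable {ρ} {ρ' : Γ →* Matrix.unitaryGroup m 𝕜}

lemma exists_units_semiconjBy_of_equiv
    (e : (unitaryRepresentation ρ).Equiv (unitaryRepresentation ρ')) :
    ∃ T : (Matrix m m 𝕜)ˣ, ∀ γ, SemiconjBy (T : Matrix m m 𝕜) (ρ γ) (ρ' γ) := by
  let toMatrix := LinearMap.toMatrixOrthonormal (EuclideanSpace.basisFun m 𝕜)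
  refine ⟨Units.map toMatrix (LinearMap.GeneralLinearGroup.ofLinearEquiv e.toLinearEquiv),
    fun γ ↦ ?_⟩
  have he : SemiconjBy e.toLinearMap (unitaryRepresentation ρ γ) (unitaryRepresentation ρ' γ) :=
    e.isIntertwining' γ
  rw [← toMatrixOrthonormal_unitaryRepresentation ρ,
    ← toMatrixOrthonormal_unitaryRepresentation ρ']
  exact he.map toMatrix

end UnitaryRepresentation

section PolarDecomposition

lemma semiconjBy_star_of_semiconjBy {A : Type*} [Monoid A] [StarMul A] {a : A} {u u' : unitary A}
    (h : SemiconjBy a (u : A) u') : SemiconjBy (star a) (u' : A) u := by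
  have hinv : SemiconjBy a (star u : A) (star u') :=
    SemiconjBy.units_inv_right (x := Unitary.toUnits u) (y := Unitary.toUnits u') h
  simpa using hinv.star_star_star

variable {A : Type*} [Ring A] [StarRing A] [TopologicalSpace A] [Algebra ℝ A]
  [NonUnitalContinuousFunctionalCalculus ℝ A IsSelfAdjoint] [PartialOrder A] [StarOrderedRing A]
  [NonnegSpectrumClass ℝ A] [IsTopologicalRing A] [T2Space A]

lemma isUnit_abs (a : Aˣ) : IsUnit (CFC.abs (a : A)) := by
  have hsq : IsUnit (CFC.abs (a : A) * CFC.abs (a : A)) :=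
    CFC.abs_mul_abs (a : A) ▸ a.isUnit.star.mul a.isUnit
  exact ((Commute.refl _).isUnit_mul_iff.1 hsq).1

lemma exists_unitary_mul_abs_eq (a : Aˣ) : ∃ k : unitary A, (k : A) * CFC.abs (a : A) = a := by
  obtain ⟨s, hs⟩ := isUnit_abs a
  have hstar : star s = s :=
    Units.ext (by simpa [hs] using (CFC.abs_nonneg (a : A)).isSelfAdjoint.star_eq)
  have hsq : star a * a = s * s :=
    Units.ext (by simpa [hs] using (CFC.abs_mul_abs (a : A)).symm)
  have hk : star (a * s⁻¹) * (a * s⁻¹) = 1 := by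
    calc star (a * s⁻¹) * (a * s⁻¹) = s⁻¹ * (star a * a) * s⁻¹ := by
          rw [star_mul, star_inv, hstar]; group
      _ = 1 := by rw [hsq]; group
  refine ⟨⟨_, (a * s⁻¹).isUnit.mem_unitary_of_star_mul_self congr(($hk : A))⟩, ?_⟩
  simp [← hs]

lemma commute_abs_of_semiconjBy {a : A} {u u' : unitary A} (h : SemiconjBy a (u : A) u') :
    Commute (CFC.abs a) (u : A) :=
  Commute.cfcₙ_nnreal ((semiconjBy_star_of_semiconjBy h).mul_left h) _

theorem exists_unitary_semiconjBy (a : Aˣ) :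
    ∃ k : unitary A, ∀ u u' : unitary A, SemiconjBy (a : A) (u : A) u' → SemiconjBy k u u' := by
  obtain ⟨k, hk⟩ := exists_unitary_mul_abs_eq a
  refine ⟨k, fun u u' h ↦ Subtype.ext <| (isUnit_abs a).mul_right_cancel ?_⟩
  calc (k * u : A) * CFC.abs (a : A) = k * CFC.abs (a : A) * u := by
        rw [mul_assoc, ← (commute_abs_of_semiconjBy h).eq, mul_assoc]
    _ = u' * k * CFC.abs (a : A) := by rw [hk, h.eq, mul_assoc, hk]

end PolarDecomposition

section UnitaryGroup

variable {m : Type*} [Fintype m] [DecidableEq m]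

lemma trace_unitary_conj {R : Type*} [CommRing R] [StarRing R]
    (k u : Matrix.unitaryGroup m R) :
    (↑(k * u * k⁻¹) : Matrix m m R).trace = (u : Matrix m m R).trace := by
  simp [Matrix.trace_mul_comm _ (star (k : Matrix m m R)), ← mul_assoc]

variable {𝕜 : Type*} [RCLike 𝕜]

open scoped MatrixOrder Matrix.Norms.L2Operator in
theorem exists_unitary_conj_of_trace_eq {Γ : Type*} [Group Γ]
    (ρ ρ' : Γ →* Matrix.unitaryGroup m 𝕜)
    (h : ∀ γ, (ρ γ : Matrix m m 𝕜).trace = (ρ' γ : Matrix m m 𝕜).trace) :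
    ∃ k, ∀ γ, ρ' γ = k * ρ γ * k⁻¹ := by
  have hss := isSemisimpleRepresentation_of_mem_unitary (unitaryRepresentation_mem_unitary ρ)
  have hss' := isSemisimpleRepresentation_of_mem_unitary (unitaryRepresentation_mem_unitary ρ')
  obtain ⟨e⟩ := nonempty_representationEquiv_of_character_eq
    (ρ := unitaryRepresentation ρ) (σ := unitaryRepresentation ρ')
    (by ext γ; simp only [character_unitaryRepresentation, h])
  obtain ⟨T, hT⟩ := exists_units_semiconjBy_of_equiv e
  obtain ⟨k, hk⟩ := exists_unitary_semiconjBy T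
  exact ⟨k, fun γ ↦ eq_mul_inv_of_mul_eq (hk _ _ (hT γ)).eq.symm⟩

theorem wilson_words_determine_diagonal_conjugacy_unitary_general {ι : Type*}
    (g g' : ι → Matrix.unitaryGroup m 𝕜)
    (h : ∀ w : FreeGroup ι,
      (FreeGroup.lift g w : Matrix m m 𝕜).trace = (FreeGroup.lift g' w : Matrix m m 𝕜).trace) :
    ∃ k : Matrix.unitaryGroup m 𝕜, ∀ i, g' i = k * g i * k⁻¹ := by
  obtain ⟨k, hk⟩ := exists_unitary_conj_of_trace_eq _ _ h
  exact ⟨k, fun i ↦ by simpa using hk (.of i)⟩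

end UnitaryGroup

/-- **Wilson loops determine the diagonal conjugacy class in `U(n)`.**
If `g, g' : Fin r → U(n)` are such that for every word `w` in the free group on `r`
generators the elements `w(g)` and `w(g')` are conjugate in `U(n)`, then `g` and `g'`
are diagonally conjugate. -/
theorem wilson_words_determine_diagonal_conjugacy_unitary
    (n r : ℕ) (hn : 1 ≤ n) (hr : 1 ≤ r)
    (g g' : Fin r → Matrix.unitaryGroup (Fin n) ℂ)
    (h : ∀ w : FreeGroup (Fin r), ∃ k : Matrix.unitaryGroup (Fin n) ℂ,
      FreeGroup.lift g' w = k * FreeGroup.lift g w * k⁻¹) :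
    ∃ k : Matrix.unitaryGroup (Fin n) ℂ, ∀ i : Fin r, g' i = k * g i * k⁻¹ := by
  refine wilson_words_determine_diagonal_conjugacy_unitary_general g g' fun w ↦ ?_
  obtain ⟨k, hk⟩ := h w
  rw [hk, trace_unitary_conj]
end

section
/- Let n ≥ 1 and let Γ = (E, V) be a graph. Let A be the unital ℂ-subalgebra of the algebra of continuous functions U(n)^E → ℂ generated by the Wilson loop functions g ↦ tr(h_l(g)) associated to all loops l in Γ (tr denotes the matrix trace of the natural n×n matrix representation). Then every continuous function f : U(n)^E → ℂ that is invariant under the action of U(n)^V (i.e. f(φ·g) = f(g) for all φ ∈ U(n)^V, g ∈ U(n)^E) lies in the closure of A with respect to the supremum norm. -/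
/-!
By the Stone–Weierstrass theorem on the quotient of `U(n)^E` by the fibres of the Wilson loops,
which are closed under complex conjugation because loops can be reversed, it suffices that two
configurations `g` and `g'` with the same Wilson loops are gauge equivalent.

For this, consider at each vertex the holonomy group of the `U(n) × U(n)`-valued configuration
`(g, g')`. Its two projections to `U(n)` have the same character. By the density theorem, two
semisimple representations with equal characters share an irreducible constituent, so cancelling
common constituents shows that they are equivalent; the unitary factor in the polar decomposition
of an equivalence of unitary representations is again an equivalence. Hence the holonomies of `g`
and `g'` at a base point are conjugate by a single unitary, and transporting it along chosen paths
from a base point of each connected component yields the gauge transformation.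
-/

/-- The source of an oriented edge `(e, ε)` in the graph with source and target maps
`s, t : E → V`: for `ε = true` the edge is traversed forwards, for `ε = false` backwards. -/
def edgeSrc {E V : Type*} (s t : E → V) (x : E × Bool) : V :=
  if x.2 then s x.1 else t x.1

/-- The target of an oriented edge `(e, ε)`. -/
def edgeTgt {E V : Type*} (s t : E → V) (x : E × Bool) : V :=
  if x.2 then t x.1 else s x.1

/-- `l` is a loop based at `v`: a nonempty composable sequence of oriented edges
starting and ending at `v`. -/
def IsLoopAt {E V : Type*} (s t : E → V) (v : V) (l : List (E × Bool)) : Prop :=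
  ∃ hne : l ≠ [], l.Chain' (fun x y => edgeTgt s t x = edgeSrc s t y) ∧
    edgeSrc s t (l.head hne) = v ∧ edgeTgt s t (l.getLast hne) = v

/-- The holonomy of a configuration `g : E → G` along `l = ((e₁,ε₁), …, (e_k,ε_k))`,
namely `g_{e_k}^{ε_k} ⋯ g_{e₁}^{ε₁}`. -/
def holonomy {E G : Type*} [Group G] (g : E → G) (l : List (E × Bool)) : G :=
  (l.reverse.map fun x => if x.2 then g x.1 else (g x.1)⁻¹).prod

/-- The gauge action of `φ : V → G` on a configuration `g : E → G`:
`(φ · g)_e = φ(t(e))⁻¹ * g_e * φ(s(e))`. -/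
def gaugeAct {E V G : Type*} [Group G] (s t : E → V) (φ : V → G) (g : E → G) : E → G :=
  fun e => (φ (t e))⁻¹ * g e * φ (s e)

section SemisimpleModule

variable {k R M N : Type*} [CommRing k] [Ring R] [Algebra k R]
  [AddCommGroup M] [Module k M] [Module R M] [IsScalarTower k R M]
  [AddCommGroup N] [Module k N] [Module R N] [IsScalarTower k R N]

theorem finite_submodule [IsNoetherianRing k] [Module.Finite k M] (p : Submodule R M) :
    Module.Finite k p :=
  .of_injective (p.subtype.restrictScalars k) p.injective_subtype

theorem trace_lsmul_congr (e : M ≃ₗ[R] N) (r : R) :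
    LinearMap.trace k M (Algebra.lsmul k k M r) = LinearMap.trace k N (Algebra.lsmul k k N r) := by
  rw [← LinearMap.trace_conj' (Algebra.lsmul k k M r) (e.restrictScalars k)]
  congr 1
  ext x
  simp [LinearEquiv.conj_apply]

theorem trace_lsmul_prod [Module.Free k M] [Module.Finite k M] [Module.Free k N]
    [Module.Finite k N] (r : R) :
    LinearMap.trace k (M × N) (Algebra.lsmul k k (M × N) r) =
      LinearMap.trace k M (Algebra.lsmul k k M r) + LinearMap.trace k N (Algebra.lsmul k k N r) :=
  LinearMap.trace_prodMap' (Algebra.lsmul k k M r) (Algebra.lsmul k k N r)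

instance isSemisimpleModule_prod_s7 [IsSemisimpleModule R M] [IsSemisimpleModule R N] :
    IsSemisimpleModule R (M × N) := by
  have : IsSemisimpleModule R (⊤ : Submodule R (M × N)) := by
    rw [← LinearMap.sup_range_inl_inr]
    exact .sup (.range _) (.range _)
  exact .congr Submodule.topEquiv.symm

theorem forall_linearMap_eq_zero_symm [IsSemisimpleModule R M] [IsSemisimpleModule R N]
    (h : ∀ g : M →ₗ[R] N, g = 0) (f : N →ₗ[R] M) : f = 0 := by
  obtain ⟨i, hi⟩ := IsSemisimpleModule.lifting_property f.rangeRestrict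
    f.surjective_rangeRestrict LinearMap.id
  obtain ⟨g, hg⟩ := IsSemisimpleModule.extension_property f.range.subtype
    f.range.injective_subtype i
  ext x
  have f_g_f : f.rangeRestrict (g (f x)) = f.rangeRestrict x :=
    LinearMap.congr_fun (hg ▸ hi) (f.rangeRestrict x)
  simpa [h g] using (congrArg Subtype.val f_g_f).symm

theorem exists_smul_eq_self_and_smul_eq_zero [IsSemisimpleModule R M] [IsSemisimpleModule R N]
    [Module.Finite k M] [Module.Finite k N] (h : ∀ f : M →ₗ[R] N, f = 0) :
    ∃ r : R, (∀ x : M, r • x = x) ∧ ∀ y : N, r • y = 0 := by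
  have snd_eq_zero (f : Module.End R (M × N)) (x : M) : (f (x, 0)).2 = 0 :=
    LinearMap.congr_fun (h (LinearMap.snd R M N ∘ₗ f ∘ₗ LinearMap.inl R M N)) x
  have fst_eq_zero (f : Module.End R (M × N)) (y : N) : (f (0, y)).1 = 0 :=
    LinearMap.congr_fun (forall_linearMap_eq_zero_symm h
      (LinearMap.fst R M N ∘ₗ f ∘ₗ LinearMap.inr R M N)) y
  -- With no maps between `M` and `N`, the projection to `M` commutes with all endomorphisms of
  -- `M × N`, so by the density theorem it is the action of an element of `R`.
  let p : Module.End (Module.End R (M × N)) (M × N) :=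
    { toFun := fun z => (z.1, 0)
      map_add' := by simp
      map_smul' := fun f ⟨x, y⟩ => by
        have : f (x, y) = f (x, 0) + f (0, y) := by simp [← map_add]
        ext <;> simp [this, snd_eq_zero, fst_eq_zero] }
  have : Module.Finite (Module.End R (M × N)) (M × N) :=
    .of_restrictScalars_finite k (Module.End R (M × N)) (M × N)
  obtain ⟨r, hr⟩ := Module.Finite.toModuleEnd_moduleEnd_surjective p
  have hr (x : M) (y : N) : r • (x, y) = (x, 0) := LinearMap.congr_fun hr (x, y)
  exact ⟨r, fun x => congrArg Prod.fst (hr x 0), fun y => congrArg Prod.snd (hr 0 y)⟩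

end SemisimpleModule

section SemisimpleTrace

variable {k R M N : Type*} [Field k] [CharZero k] [Ring R] [Algebra k R]
  [AddCommGroup M] [Module k M] [Module R M] [IsScalarTower k R M] [Module.Finite k M]
  [AddCommGroup N] [Module k N] [Module R N] [IsScalarTower k R N] [Module.Finite k N]
  [IsSemisimpleModule R M] [IsSemisimpleModule R N]

theorem exists_linearMap_ne_zero_of_trace_eq [Nontrivial M]
    (h : ∀ r : R, LinearMap.trace k M (Algebra.lsmul k k M r) =
      LinearMap.trace k N (Algebra.lsmul k k N r)) :
    ∃ f : M →ₗ[R] N, f ≠ 0 := by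
  by_contra! hMN
  obtain ⟨r, hrM, hrN⟩ := exists_smul_eq_self_and_smul_eq_zero (k := k) hMN
  have hM : Algebra.lsmul k k M r = LinearMap.id := LinearMap.ext hrM
  have hN : Algebra.lsmul k k N r = 0 := LinearMap.ext hrN
  have := h r
  rw [hM, hN, LinearMap.trace_id, map_zero, Nat.cast_eq_zero] at this
  exact Module.finrank_pos.ne' this

theorem nonempty_linearEquiv_of_trace_eq
    (h : ∀ r : R, LinearMap.trace k M (Algebra.lsmul k k M r) =
      LinearMap.trace k N (Algebra.lsmul k k N r)) :
    Nonempty (M ≃ₗ[R] N) := by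
  induction hd : Module.finrank k M using Nat.strong_induction_on generalizing M N with
  | _ d ih =>
  subst hd
  cases subsingleton_or_nontrivial M with
  | inl hM =>
    have hN : Module.finrank k N = 0 := by
      simpa [Module.finrank_zero_of_subsingleton] using (h 1).symm
    have := Module.finrank_zero_iff.mp hN
    exact ⟨0⟩
  | inr hM =>
    obtain ⟨f, hf⟩ := exists_linearMap_ne_zero_of_trace_eq h
    obtain ⟨C, hC⟩ := exists_isCompl f.ker
    obtain ⟨D, hD⟩ := exists_isCompl f.range
    let eM : (f.ker × f.range) ≃ₗ[R] M :=
      ((LinearEquiv.refl R f.ker).prodCongr (f.kerComplementEquivRange hC.symm).symm).trans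
        (Submodule.prodEquivOfIsCompl f.ker C hC)
    let eN : (D × f.range) ≃ₗ[R] N := Submodule.prodEquivOfIsCompl D f.range hD.symm
    have finite_ker : Module.Finite k f.ker := finite_submodule _
    have finite_range : Module.Finite k f.range := finite_submodule _
    have finite_D : Module.Finite k D := finite_submodule _
    have hker (r : R) : LinearMap.trace k f.ker (Algebra.lsmul k k f.ker r) =
        LinearMap.trace k D (Algebra.lsmul k k D r) := by
      have := h r
      rwa [← trace_lsmul_congr eM, ← trace_lsmul_congr eN, trace_lsmul_prod, trace_lsmul_prod,
        add_left_inj] at this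
    have hlt : Module.finrank k f.ker < Module.finrank k M := by
      refine Submodule.finrank_lt (s := f.ker.restrictScalars k) fun htop => hf ?_
      simpa [LinearMap.ker_eq_top] using htop
    obtain ⟨e⟩ := ih _ hlt hker rfl
    exact ⟨(eM.symm.trans (e.prodCongr (LinearEquiv.refl R f.range))).trans eN⟩

end SemisimpleTrace

section UnitaryRepresentation

theorem nonempty_equiv_of_character_eq {k G V W : Type*} [Field k] [CharZero k] [Monoid G]
    [AddCommGroup V] [Module k V] [Module.Finite k V]
    [AddCommGroup W] [Module k W] [Module.Finite k W]
    {ρ : Representation k G V} {σ : Representation k G W}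
    (hρ : ρ.IsSemisimpleRepresentation) (hσ : σ.IsSemisimpleRepresentation)
    (h : ρ.character = σ.character) : Nonempty (ρ.Equiv σ) := by
  let _ : Module (MonoidAlgebra k G) V := Module.compHom V ρ.asAlgebraHom.toRingHom
  let _ : Module (MonoidAlgebra k G) W := Module.compHom W σ.asAlgebraHom.toRingHom
  have : IsScalarTower k (MonoidAlgebra k G) V :=
    .of_algebraMap_smul fun a => LinearMap.congr_fun (ρ.asAlgebraHom.commutes a)
  have : IsScalarTower k (MonoidAlgebra k G) W :=
    .of_algebraMap_smul fun a => LinearMap.congr_fun (σ.asAlgebraHom.commutes a)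
  have : IsSemisimpleModule (MonoidAlgebra k G) V :=
    Representation.isSemisimpleRepresentation_iff_isSemisimpleModule_asModule _ |>.mp hρ
  have : IsSemisimpleModule (MonoidAlgebra k G) W :=
    Representation.isSemisimpleRepresentation_iff_isSemisimpleModule_asModule _ |>.mp hσ
  have htrace : LinearMap.trace k V ∘ₗ ρ.asAlgebraHom.toLinearMap =
      LinearMap.trace k W ∘ₗ σ.asAlgebraHom.toLinearMap := by
    ext g
    simpa [Representation.character] using congrFun h g
  obtain ⟨e⟩ := nonempty_linearEquiv_of_trace_eq (k := k) (R := MonoidAlgebra k G)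
    (LinearMap.congr_fun htrace)
  refine ⟨.mk (e.restrictScalars k) fun g => LinearMap.ext fun x => ?_⟩
  have smul_of (x : V) : MonoidAlgebra.of k G g • x = ρ g x :=
    LinearMap.congr_fun (ρ.asAlgebraHom_of g) x
  have smul_of' (x : W) : MonoidAlgebra.of k G g • x = σ g x :=
    LinearMap.congr_fun (σ.asAlgebraHom_of g) x
  calc e (ρ g x) = e (MonoidAlgebra.of k G g • x) := by rw [smul_of]
    _ = MonoidAlgebra.of k G g • e x := e.map_smul _ _
    _ = σ g (e x) := smul_of' _

theorem isSemisimpleRepresentation_of_inner_map {𝕜 G V : Type*} [RCLike 𝕜] [Group G]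
    [NormedAddCommGroup V] [InnerProductSpace 𝕜 V] [FiniteDimensional 𝕜 V]
    {ρ : Representation 𝕜 G V} (hρ : ∀ g x y, inner 𝕜 (ρ g x) (ρ g y) = inner 𝕜 x y) :
    ρ.IsSemisimpleRepresentation where
  exists_isCompl σ := by
    have invariant (g : G) {x : V} (hx : x ∈ σ.toSubmoduleᗮ) : ρ g x ∈ σ.toSubmoduleᗮ :=
      fun y hy => by
        have := hx _ (σ.apply_mem_toSubmodule g⁻¹ hy)
        rwa [← hρ g, ρ.self_inv_apply] at this
    have hcompl := σ.toSubmodule.isCompl_orthogonal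
    refine ⟨⟨σ.toSubmoduleᗮ, fun g x => invariant g⟩, ?_⟩
    rw [isCompl_iff, disjoint_iff, codisjoint_iff]
    exact ⟨Subrepresentation.toSubmodule_injective hcompl.inf_eq_bot,
      Subrepresentation.toSubmodule_injective hcompl.sup_eq_top⟩

end UnitaryRepresentation

section Unitary

theorem exists_unitary_mul_eq_mul {A : Type*} [CStarAlgebra A] (t : Aˣ) :
    ∃ u : unitary A, ∀ a b : A, t * a = b * t → t * star a = star b * t → u * a = b * u := by
  let _ := CStarAlgebra.spectralOrder A
  have _ := CStarAlgebra.spectralOrderedRing A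
  obtain ⟨p, hp⟩ : IsUnit (CFC.abs (t : A)) :=
    (CFC.isUnit_sqrt_iff (star (t : A) * t)).mpr (t.isUnit.star.mul t.isUnit)
  have star_p_mul_p : star p * p = star t * t := Units.ext <| by
    simp [hp, (CFC.abs_nonneg (t : A)).isSelfAdjoint.star_eq, CFC.abs_mul_abs]
  refine ⟨⟨t * ↑p⁻¹, (t.mul_inv_mem_unitary p).mpr star_p_mul_p.symm⟩, fun a b hab hab' => ?_⟩
  have star_t_mul : star (t : A) * b = a * star (t : A) := by
    simpa only [star_mul, star_star] using (congrArg star hab').symm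
  have commute_sq : Commute (star (t : A) * t) a := by
    rw [commute_iff_eq, mul_assoc, hab, ← mul_assoc, star_t_mul, mul_assoc]
  have commute_p : Commute (p : A) a := hp ▸ commute_sq.cfcₙ_nnreal _
  rw [mul_assoc, commute_p.units_inv_left.eq, ← mul_assoc, hab, mul_assoc]

theorem exists_unitary_conj_eq_of_linearMap_trace_eq {G H : Type*} [Group G]
    [NormedAddCommGroup H] [InnerProductSpace ℂ H] [FiniteDimensional ℂ H] [CompleteSpace H]
    (ρ σ : G →* unitary (H →L[ℂ] H))
    (h : ∀ g, LinearMap.trace ℂ H (ρ g : H →L[ℂ] H) = LinearMap.trace ℂ H (σ g : H →L[ℂ] H)) :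
    ∃ u : unitary (H →L[ℂ] H), ∀ g, u * ρ g * u⁻¹ = σ g := by
  let toRep (τ : G →* unitary (H →L[ℂ] H)) : Representation ℂ G H :=
    (ContinuousLinearMap.toLinearMapRingHom (R₁ := ℂ) (M₁ := H)).toMonoidHom.comp
      ((unitary (H →L[ℂ] H)).subtype.comp τ)
  have semisimple (τ) : (toRep τ).IsSemisimpleRepresentation :=
    isSemisimpleRepresentation_of_inner_map fun g =>
      ContinuousLinearMap.inner_map_map_of_mem_unitary (τ g).2
  obtain ⟨e⟩ := nonempty_equiv_of_character_eq (semisimple ρ) (semisimple σ) (funext h)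
  let t : (H →L[ℂ] H)ˣ :=
    (ContinuousLinearEquiv.unitsEquiv ℂ H).symm e.toLinearEquiv.toContinuousLinearEquiv
  have t_mul (g : G) : t * (ρ g : H →L[ℂ] H) = σ g * t :=
    ContinuousLinearMap.ext fun x => e.toIntertwiningMap.isIntertwining _ _ g x
  obtain ⟨u, hu⟩ := exists_unitary_mul_eq_mul t
  refine ⟨u, fun g => mul_inv_eq_of_eq_mul <| Subtype.ext <| hu _ _ (t_mul g) ?_⟩
  have := t_mul g⁻¹
  rwa [map_inv, map_inv, ← Unitary.star_eq_inv, ← Unitary.star_eq_inv] at this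

theorem exists_unitary_conj_eq_of_matrix_trace_eq {G ι : Type*} [Group G] [Fintype ι]
    [DecidableEq ι] (ρ σ : G →* Matrix.unitaryGroup ι ℂ)
    (h : ∀ g, Matrix.trace (ρ g : Matrix ι ι ℂ) = Matrix.trace (σ g : Matrix ι ι ℂ)) :
    ∃ u : Matrix.unitaryGroup ι ℂ, ∀ g, u * ρ g * u⁻¹ = σ g := by
  have trace_toEuclideanCLM (A : Matrix ι ι ℂ) :
      LinearMap.trace ℂ (EuclideanSpace ℂ ι) (Matrix.toEuclideanCLM (𝕜 := ℂ) A) = A.trace := by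
    rw [Matrix.coe_toEuclideanCLM_eq_toEuclideanLin, Matrix.toEuclideanLin,
      Matrix.toLpLin_eq_toLin, Matrix.trace_toLin_eq]
  let toCLM := Matrix.toEuclideanCLM (n := ι) (𝕜 := ℂ)
  let Φ : Matrix.unitaryGroup ι ℂ ≃* unitary (EuclideanSpace ℂ ι →L[ℂ] EuclideanSpace ℂ ι) :=
    (Unitary.mapEquiv { toCLM with map_mul' := map_mul toCLM }).toMulEquiv
  obtain ⟨u, hu⟩ := exists_unitary_conj_eq_of_linearMap_trace_eq
    (Φ.toMonoidHom.comp ρ) (Φ.toMonoidHom.comp σ) fun g =>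
      (trace_toEuclideanCLM _).trans ((h g).trans (trace_toEuclideanCLM _).symm)
  refine ⟨Φ.symm u, fun g => Φ.injective ?_⟩
  rw [Φ.map_mul, Φ.map_mul, Φ.map_inv, Φ.apply_symm_apply]
  exact hu g

end Unitary

section Path

variable {E V G H : Type*} [Group G] [Group H]

/-- `IsPath s t v l w` says that `l` is a composable, possibly empty, sequence of oriented edges
leading from `v` to `w`. -/
def IsPath (s t : E → V) : V → List (E × Bool) → V → Prop
  | v, [], w => v = w
  | v, x :: l, w => edgeSrc s t x = v ∧ IsPath s t (edgeTgt s t x) l w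

variable {s t : E → V} {u v w : V} {l l' : List (E × Bool)}

theorem isPath_iff (hl : l ≠ []) :
    IsPath s t v l w ↔ l.IsChain (fun x y => edgeTgt s t x = edgeSrc s t y) ∧
      edgeSrc s t (l.head hl) = v ∧ edgeTgt s t (l.getLast hl) = w := by
  induction l generalizing v with
  | nil => exact absurd rfl hl
  | cons x l ih =>
    cases l with
    | nil => simp [IsPath]
    | cons y l =>
      rw [IsPath, ih (List.cons_ne_nil y l)]
      simp only [List.isChain_cons_cons, List.head_cons, List.getLast_cons_cons]
      grind

theorem isLoopAt_iff : IsLoopAt s t v l ↔ l ≠ [] ∧ IsPath s t v l v :=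
  ⟨fun ⟨hl, h⟩ => ⟨hl, (isPath_iff hl).mpr h⟩, fun ⟨hl, h⟩ => ⟨hl, (isPath_iff hl).mp h⟩⟩

theorem isPath_singleton (s t : E → V) (e : E) : IsPath s t (s e) [(e, true)] (t e) := by
  simp [IsPath, edgeSrc, edgeTgt]

theorem IsPath.append (h : IsPath s t u l v) (h' : IsPath s t v l' w) :
    IsPath s t u (l ++ l') w := by
  induction l generalizing u with
  | nil => exact h ▸ h'
  | cons x l ih => exact ⟨h.1, ih h.2⟩

theorem IsPath.invRev (h : IsPath s t v l w) : IsPath s t w (FreeGroup.invRev l) v := by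
  induction l generalizing v with
  | nil => exact h.symm
  | cons x l ih =>
    rw [FreeGroup.invRev_cons]
    obtain ⟨rfl, h⟩ := h
    refine (ih h).append ?_
    obtain ⟨e, _ | _⟩ := x <;> simp [FreeGroup.invRev, IsPath, edgeSrc, edgeTgt]

theorem holonomy_nil (g : E → G) : holonomy g [] = 1 := rfl

theorem holonomy_singleton (g : E → G) (e : E) : holonomy g [(e, true)] = g e := by
  simp [holonomy]

theorem holonomy_append (g : E → G) (l l' : List (E × Bool)) :
    holonomy g (l ++ l') = holonomy g l' * holonomy g l := by
  simp [holonomy]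

theorem holonomy_invRev (g : E → G) (l : List (E × Bool)) :
    holonomy g (FreeGroup.invRev l) = (holonomy g l)⁻¹ := by
  induction l with
  | nil => simp [holonomy_nil]
  | cons x l ih =>
    rw [FreeGroup.invRev_cons, holonomy_append, ih, ← List.singleton_append (l := l),
      holonomy_append, mul_inv_rev, mul_left_inj]
    obtain ⟨e, _ | _⟩ := x <;> simp [FreeGroup.invRev, holonomy]

theorem map_holonomy (F : G →* H) (g : E → G) (l : List (E × Bool)) :
    F (holonomy g l) = holonomy (fun e => F (g e)) l := by
  simp only [holonomy, map_list_prod, List.map_map]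
  congr 2
  ext x
  simp [apply_ite F]

theorem continuous_holonomy [TopologicalSpace G] [IsTopologicalGroup G] (l : List (E × Bool)) :
    Continuous fun g : E → G => holonomy g l := by
  refine continuous_list_prod _ fun ⟨e, ε⟩ _ => ?_
  cases ε
  · exact (continuous_apply e).inv
  · exact continuous_apply e

/-- The holonomy group of the configuration `g` at the vertex `v`: the holonomies along all closed
paths based at `v`, the empty one included. -/
def holonomyGroup (s t : E → V) (v : V) (g : E → G) : Subgroup G where
  carrier := {x | ∃ l, IsPath s t v l v ∧ holonomy g l = x}
  one_mem' := ⟨[], rfl, rfl⟩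
  mul_mem' := fun ⟨l, hl, hx⟩ ⟨l', hl', hy⟩ =>
    ⟨l' ++ l, hl'.append hl, by rw [holonomy_append, hx, hy]⟩
  inv_mem' := fun ⟨l, hl, hx⟩ => ⟨FreeGroup.invRev l, hl.invRev, by rw [holonomy_invRev, hx]⟩

variable (s t) in
theorem exists_basepoint_path :
    ∃ (b : V → V) (p : V → List (E × Bool)),
      (∀ v, IsPath s t (b v) (p v) v) ∧ ∀ e, b (s e) = b (t e) := by
  let connected : Setoid V :=
    { r := fun v w => ∃ l, IsPath s t v l w
      iseqv :=
        { refl := fun _ => ⟨[], rfl⟩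
          symm := fun ⟨_, hl⟩ => ⟨_, hl.invRev⟩
          trans := fun ⟨_, hl⟩ ⟨_, hl'⟩ => ⟨_, hl.append hl'⟩ } }
  choose p hp using fun v => Quotient.mk_out (s := connected) v
  exact ⟨fun v => (Quotient.mk connected v).out, p, hp, fun e =>
    congrArg Quotient.out (Quotient.sound (s := connected) ⟨_, isPath_singleton s t e⟩)⟩

theorem exists_gaugeAct_eq {g g' : E → G}
    (h : ∀ v, ∃ u : G, ∀ l, IsPath s t v l v → u * holonomy g l * u⁻¹ = holonomy g' l) :
    ∃ φ : V → G, gaugeAct s t φ g = g' := by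
  choose u hu using h
  obtain ⟨b, p, hp, hb⟩ := exists_basepoint_path s t
  refine ⟨fun v => holonomy g (p v) * (u (b v))⁻¹ * (holonomy g' (p v))⁻¹, funext fun e => ?_⟩
  have hloop := hu (b (s e)) (p (s e) ++ [(e, true)] ++ FreeGroup.invRev (p (t e))) <|
    ((hp (s e)).append (isPath_singleton s t e)).append (hb e ▸ (hp (t e)).invRev)
  simp only [holonomy_append, holonomy_invRev, holonomy_singleton] at hloop
  have := congrArg (holonomy g' (p (t e)) * · * (holonomy g' (p (s e)))⁻¹) hloop
  simpa [gaugeAct, hb e, mul_assoc] using this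

end Path

section WilsonLoop

variable {ι E V : Type*} [Fintype ι] [DecidableEq ι] {s t : E → V}

variable (ι) in
/-- The Wilson loop of `l`, the trace of the holonomy along `l`, as a continuous function on
`U(ι)^E`. Here `l` may be any sequence of oriented edges. -/
def wilsonLoop (l : List (E × Bool)) : C(E → Matrix.unitaryGroup ι ℂ, ℂ) where
  toFun g := Matrix.trace (holonomy g l).val
  continuous_toFun := (continuous_subtype_val.comp (continuous_holonomy l)).matrix_trace

@[simp]
theorem wilsonLoop_apply (l : List (E × Bool)) (g : E → Matrix.unitaryGroup ι ℂ) :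
    wilsonLoop ι l g = Matrix.trace (holonomy g l).val :=
  rfl

variable (ι s t) in
/-- The Wilson loops of all loops of the graph with source and target maps `s` and `t`. -/
def wilsonLoops : Set C(E → Matrix.unitaryGroup ι ℂ, ℂ) :=
  {F | ∃ v l, IsLoopAt s t v l ∧ F = wilsonLoop ι l}

theorem star_wilsonLoop (l : List (E × Bool)) :
    star (wilsonLoop ι l) = wilsonLoop ι (FreeGroup.invRev l) := by
  ext g
  simp [holonomy_invRev, Matrix.star_eq_conjTranspose]

theorem star_wilsonLoops : star (wilsonLoops ι s t) = wilsonLoops ι s t := by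
  have star_mem {F} (hF : F ∈ wilsonLoops ι s t) : star F ∈ wilsonLoops ι s t := by
    obtain ⟨v, l, hl, rfl⟩ := hF
    obtain ⟨hne, hl⟩ := isLoopAt_iff.mp hl
    exact ⟨v, _, isLoopAt_iff.mpr ⟨by simpa [FreeGroup.invRev] using hne, hl.invRev⟩,
      star_wilsonLoop l⟩
  exact Set.Subset.antisymm (fun F hF => star_star F ▸ star_mem hF) fun F hF => star_mem hF

theorem exists_gaugeAct_eq_of_wilsonLoop_eq {g g' : E → Matrix.unitaryGroup ι ℂ}
    (h : ∀ F ∈ wilsonLoops ι s t, F g = F g') :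
    ∃ φ : V → Matrix.unitaryGroup ι ℂ, gaugeAct s t φ g = g' := by
  refine exists_gaugeAct_eq fun v => ?_
  let Γ := holonomyGroup s t v fun e => (g e, g' e)
  have fst_holonomy (l : List (E × Bool)) :
      (holonomy (fun e => (g e, g' e)) l).1 = holonomy g l :=
    map_holonomy (MonoidHom.fst _ _) (fun e => (g e, g' e)) l
  have snd_holonomy (l : List (E × Bool)) :
      (holonomy (fun e => (g e, g' e)) l).2 = holonomy g' l :=
    map_holonomy (MonoidHom.snd _ _) (fun e => (g e, g' e)) l
  obtain ⟨u, hu⟩ := exists_unitary_conj_eq_of_matrix_trace_eq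
    ((MonoidHom.fst _ _).comp Γ.subtype) ((MonoidHom.snd _ _).comp Γ.subtype) <| by
      rintro ⟨_, l, hl, rfl⟩
      by_cases hne : l = []
      · subst hne
        rfl
      · have := h _ ⟨v, l, isLoopAt_iff.mpr ⟨hne, hl⟩, rfl⟩
        simpa [fst_holonomy, snd_holonomy] using this
  exact ⟨u, fun l hl => by simpa [fst_holonomy, snd_holonomy] using hu ⟨_, l, hl, rfl⟩⟩

end WilsonLoop

section Density

open scoped Matrix.Norms.L2Operator in
instance compactSpace_unitaryGroup {𝕜 ι : Type*} [RCLike 𝕜] [Fintype ι] [DecidableEq ι] :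
    CompactSpace (Matrix.unitaryGroup ι 𝕜) := by
  have : ProperSpace (Matrix ι ι 𝕜) := FiniteDimensional.proper 𝕜 _
  have norm_le : ∀ U ∈ unitary (Matrix ι ι 𝕜), ‖U‖ ≤ ‖(1 : Matrix ι ι 𝕜)‖ := fun U hU => by
    simpa using (CStarRing.norm_mem_unitary_mul 1 hU).le
  exact isCompact_iff_compactSpace.mp <| Metric.isCompact_of_isClosed_isBounded isClosed_unitary <|
    isBounded_iff_forall_norm_le.mpr ⟨_, norm_le⟩

theorem mem_topologicalClosure_of_forall_eq {𝕜 X : Type*} [RCLike 𝕜] [TopologicalSpace X]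
    [CompactSpace X] (A : StarSubalgebra 𝕜 C(X, 𝕜)) {f : C(X, 𝕜)}
    (hf : ∀ x y, (∀ F ∈ A, F x = F y) → f x = f y) : f ∈ A.topologicalClosure := by
  let S : Setoid X := Setoid.ker fun x (F : A) => (F : C(X, 𝕜)) x
  have hS {x y : X} : S x y ↔ ∀ F ∈ A, F x = F y := by
    simp [S, Setoid.ker_def, funext_iff]
  let q : C(X, Quotient S) := ⟨Quotient.mk S, continuous_quotient_mk'⟩
  let descend (F : C(X, 𝕜)) (hF : ∀ x y, S x y → F x = F y) : C(Quotient S, 𝕜) :=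
    ⟨Quotient.lift F hF, F.continuous.quotient_lift hF⟩
  let B : StarSubalgebra 𝕜 C(Quotient S, 𝕜) := A.comap (ContinuousMap.compStarAlgHom' 𝕜 𝕜 q)
  have separates : B.SeparatesPoints := by
    rintro ⟨x⟩ ⟨y⟩ hxy
    obtain ⟨F, hF, hne⟩ : ∃ F ∈ A, F x ≠ F y := by
      by_contra! h
      exact hxy (Quotient.sound (hS.mpr h))
    exact ⟨_, ⟨descend F fun x y h => hS.mp h F hF, hF, rfl⟩, hne⟩
  have mem_closure :
      descend f (fun x y h => hf x y (hS.mp h)) ∈ closure (B : Set C(Quotient S, 𝕜)) := by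
    rw [← StarSubalgebra.topologicalClosure_coe,
      ContinuousMap.starSubalgebra_topologicalClosure_eq_top_of_separatesPoints B separates]
    trivial
  exact map_mem_closure (ContinuousMap.continuous_precomp q) mem_closure fun F hF => hF

theorem wilson_loops_dense_unitary_general {ι E V : Type*} [Fintype ι] [DecidableEq ι]
    (s t : E → V) (f : C(E → Matrix.unitaryGroup ι ℂ, ℂ))
    (hf : ∀ φ g, f (gaugeAct s t φ g) = f g) :
    f ∈ closure (Algebra.adjoin ℂ (wilsonLoops ι s t) : Set C(E → Matrix.unitaryGroup ι ℂ, ℂ)) := by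
  have hadjoin : (StarAlgebra.adjoin ℂ (wilsonLoops ι s t)).toSubalgebra =
      Algebra.adjoin ℂ (wilsonLoops ι s t) := by
    rw [StarAlgebra.adjoin_toSubalgebra, star_wilsonLoops, Set.union_self]
  rw [← hadjoin]
  refine mem_topologicalClosure_of_forall_eq (StarAlgebra.adjoin ℂ (wilsonLoops ι s t))
    fun g g' h => ?_
  obtain ⟨φ, rfl⟩ := exists_gaugeAct_eq_of_wilsonLoop_eq fun F hF =>
    h F (StarAlgebra.subset_adjoin ℂ _ hF)
  exact (hf φ g).symm

end Density

/-- **Density of Wilson loops for `U(n)` lattice gauge theory.** Every continuous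
gauge-invariant function on the configuration space `U(n)^E` of a graph lies in the
uniform closure of the algebra generated by the Wilson loops `g ↦ tr(h_l(g))`. -/
theorem wilson_loops_dense_unitary
    (n : ℕ) (hn : 1 ≤ n)
    {E V : Type} [Fintype E] [Fintype V] (s t : E → V)
    (W : Set C((E → Matrix.unitaryGroup (Fin n) ℂ), ℂ))
    (hWdef : W = {F | ∃ (v : V) (l : List (E × Bool)), IsLoopAt s t v l ∧
      ∀ g : E → Matrix.unitaryGroup (Fin n) ℂ,
        F g = Matrix.trace ((holonomy g l : Matrix.unitaryGroup (Fin n) ℂ) :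
          Matrix (Fin n) (Fin n) ℂ)})
    (f : C((E → Matrix.unitaryGroup (Fin n) ℂ), ℂ))
    (hf : ∀ (φ : V → Matrix.unitaryGroup (Fin n) ℂ)
      (g : E → Matrix.unitaryGroup (Fin n) ℂ), f (gaugeAct s t φ g) = f g) :
    f ∈ closure ((Algebra.adjoin ℂ W :
      Subalgebra ℂ C((E → Matrix.unitaryGroup (Fin n) ℂ), ℂ)) :
      Set C((E → Matrix.unitaryGroup (Fin n) ℂ), ℂ)) := by
  have hW : W = wilsonLoops (Fin n) s t := by
    ext F
    simp [hWdef, wilsonLoops, ContinuousMap.ext_iff]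
  exact hW ▸ wilson_loops_dense_unitary_general s t f hf
end

section
/- (Schur–Weyl duality, commutant direction.) Let n ≥ 1 and d ≥ 1, and let V = ℂ^n. Every ℂ-linear endomorphism of V^{⊗d} that commutes with u^{⊗d} for every u ∈ U(n) is a ℂ-linear combination of the permutation operators π(σ), σ ∈ S_d. Consequently End_{U(n)}(V^{⊗d}) is spanned as a vector space by {π(σ) : σ ∈ S_d}. -/
open scoped TensorProduct

/-- The permutation operator `π(σ)` on `(ℂ^n)^{⊗d}`, determined by
`π(σ)(v₁ ⊗ ⋯ ⊗ v_d) = v_{σ⁻¹(1)} ⊗ ⋯ ⊗ v_{σ⁻¹(d)}`. -/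
noncomputable def permMap (n d : ℕ) (σ : Equiv.Perm (Fin d)) :
    (⨂[ℂ] _ : Fin d, (Fin n → ℂ)) →ₗ[ℂ] ⨂[ℂ] _ : Fin d, (Fin n → ℂ) :=
  (PiTensorProduct.reindex ℂ (fun _ : Fin d => Fin n → ℂ) σ).toLinearMap

/-- The diagonal action `u^{⊗d}` of a matrix `u` on `(ℂ^n)^{⊗d}`. -/
noncomputable def tensorPowMap (n d : ℕ) (u : Matrix (Fin n) (Fin n) ℂ) :
    (⨂[ℂ] _ : Fin d, (Fin n → ℂ)) →ₗ[ℂ] ⨂[ℂ] _ : Fin d, (Fin n → ℂ) :=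
  PiTensorProduct.map fun _ => Matrix.mulVecLin u

/-
Two multilinear maps that agree on the diagonal at `∑ a, z a • b a` for all `z` in a product of
infinite subsets of the scalars agree for all `z`, since both sides are polynomials in `z`.
Applied to `z` in a torus, with `b` the spectral projections of a Hermitian matrix, this extends
`f u^{⊗d} = u^{⊗d} f` from unitary to Hermitian `u`; applied to real `z`, with `b` consisting of
the real and imaginary parts of a matrix, it extends from Hermitian to all matrices. Comparing the
coefficients of the multilinear monomial, `f` commutes with every `∑ σ, A (σ 1) ⊗ ⋯ ⊗ A (σ d)`.
These are averages over `S_d` of the operators `A 1 ⊗ ⋯ ⊗ A d`, which span `End(V^{⊗d})`, so `f`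
commutes with the whole commutant of `S_d`. By Maschke's theorem and Jacobson density, the
commutant of that commutant is spanned by the permutations.
-/

namespace SchurWeyl

section Multilinear

variable {K ι κ E F : Type*}

section Polynomial

variable [CommSemiring K] [AddCommMonoid E] [Module K E] [Fintype ι]

theorem sum_single_one_eq_iff_bijective {r : ι → ι} :
    (∑ i, Finsupp.single (r i) 1 = ∑ i, Finsupp.single i (1 : ℕ)) ↔ Function.Bijective r := by
  constructor
  · intro h
    refine Finite.surjective_iff_bijective.1 fun a => ?_
    by_contra! ha
    simpa [Finsupp.finsetSum_apply, Finsupp.single_apply, ha] using DFunLike.congr_fun h a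
  · exact fun h => h.sum_comp fun a => Finsupp.single a 1

variable [DecidableEq ι]

/-- The polynomial function `z ↦ T (∑ a, z a • b a, …, ∑ a, z a • b a)`, as a polynomial in the
coordinates `z a` of a vector on the diagonal of `T`. -/
noncomputable def diagPolynomial [Fintype κ] (T : MultilinearMap K (fun _ : ι => E) K)
    (b : κ → E) : MvPolynomial κ K :=
  ∑ r : ι → κ, MvPolynomial.C (T fun i => b (r i)) * ∏ i, MvPolynomial.X (r i)

theorem eval_diagPolynomial [Fintype κ] (T : MultilinearMap K (fun _ : ι => E) K)
    (b : κ → E) (z : κ → K) :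
    MvPolynomial.eval z (diagPolynomial T b) = T fun _ => ∑ a, z a • b a := by
  simp [diagPolynomial, T.map_sum, T.map_smul_univ, mul_comm]

theorem coeff_diagPolynomial (T : MultilinearMap K (fun _ : ι => E) K) (b : ι → E) :
    (diagPolynomial T b).coeff (∑ i, Finsupp.single i 1) =
      ∑ σ : Equiv.Perm ι, T fun i => b (σ i) := by
  classical
  have prod_X (r : ι → ι) : ∏ i, MvPolynomial.X (r i) =
      MvPolynomial.monomial (∑ i, Finsupp.single (r i) 1) (1 : K) :=
    (MvPolynomial.monomial_sum_one _ _).symm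
  simp only [diagPolynomial, MvPolynomial.coeff_sum, MvPolynomial.coeff_C_mul, prod_X,
    MvPolynomial.coeff_monomial, sum_single_one_eq_iff_bijective, mul_ite, mul_one, mul_zero]
  symm
  refine Fintype.sum_of_injective (fun σ : Equiv.Perm ι => (σ : ι → ι)) DFunLike.coe_injective
    _ _ (fun r hr => if_neg fun h => hr ⟨Equiv.ofBijective r h, rfl⟩) fun σ => ?_
  rw [if_pos σ.bijective]

end Polynomial

variable [CommRing K] [IsDomain K] [AddCommMonoid E] [Module K E]
  [AddCommMonoid F] [Module K F] [Module.Projective K F]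
  {T T' : MultilinearMap K (fun _ : ι => E) F}

theorem diag_eq_of_forall_mem_box [Finite ι] [Fintype κ] {b : κ → E} {S : Set K}
    (hS : S.Infinite)
    (hT : ∀ z : κ → K, (∀ a, z a ∈ S) → T (fun _ => ∑ a, z a • b a) = T' fun _ => ∑ a, z a • b a)
    (z : κ → K) : T (fun _ => ∑ a, z a • b a) = T' fun _ => ∑ a, z a • b a := by
  classical
  have := Fintype.ofFinite ι
  refine Module.eval_apply_injective K (LinearMap.ext fun φ => ?_)
  have hP : diagPolynomial (φ.compMultilinearMap T) b =
      diagPolynomial (φ.compMultilinearMap T') b :=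
    MvPolynomial.funext_set (fun _ => S) (fun _ => hS) fun z hz => by
      simp [eval_diagPolynomial, hT z fun a => hz a trivial]
  simpa [eval_diagPolynomial] using congr(MvPolynomial.eval z $hP)

theorem sum_perm_eq_of_diag_eq [Infinite K] [Fintype ι] [DecidableEq ι]
    (hT : ∀ x, T (fun _ => x) = T' fun _ => x) (b : ι → E) :
    ∑ σ : Equiv.Perm ι, T (fun i => b (σ i)) = ∑ σ : Equiv.Perm ι, T' fun i => b (σ i) := by
  refine Module.eval_apply_injective K (LinearMap.ext fun φ => ?_)
  have hP : diagPolynomial (φ.compMultilinearMap T) b =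
      diagPolynomial (φ.compMultilinearMap T') b :=
    MvPolynomial.funext fun z => by simp [eval_diagPolynomial, hT]
  simpa [coeff_diagPolynomial] using congr(($hP).coeff (∑ i, Finsupp.single i 1))

end Multilinear

section UnitarianTrick

variable {ι n F : Type*} [Finite ι] [Fintype n] [DecidableEq n] [AddCommMonoid F] [Module ℂ F]
  [Module.Projective ℂ F] {T T' : MultilinearMap ℂ (fun _ : ι => Matrix n n ℂ) F}

theorem infinite_unitSphere_complex : {z : ℂ | ‖z‖ = 1}.Infinite := by
  have infinite_Ioc : Infinite (Set.Ioc (-Real.pi) Real.pi) :=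
    Set.Ioc.infinite (by linarith [Real.pi_pos])
  have infinite_circle : Infinite Circle := Circle.argEquiv.infinite_iff.2 infinite_Ioc
  have infinite_range : (Set.range ((↑) : Circle → ℂ)).Infinite :=
    @Set.infinite_range_of_injective _ _ infinite_circle _ Circle.coe_injective
  exact infinite_range.mono <| Set.range_subset_iff.2 Circle.norm_coe

theorem diagonal_mem_unitaryGroup {z : n → ℂ} (hz : ∀ a, ‖z a‖ = 1) :
    Matrix.diagonal z ∈ Matrix.unitaryGroup n ℂ := by
  rw [Matrix.mem_unitaryGroup_iff, Matrix.star_eq_conjTranspose, Matrix.diagonal_conjTranspose,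
    Matrix.diagonal_mul_diagonal, ← Matrix.diagonal_one]
  congr with a
  simp [Complex.mul_conj, Complex.normSq_eq_norm_sq, hz]

theorem diag_eq_of_isHermitian
    (hT : ∀ u ∈ Matrix.unitaryGroup n ℂ, T (fun _ => u) = T' fun _ => u)
    {A : Matrix n n ℂ} (hA : A.IsHermitian) : T (fun _ => A) = T' fun _ => A := by
  let U : Matrix n n ℂ := hA.eigenvectorUnitary
  let b (a : n) : Matrix n n ℂ := U * Matrix.single a a 1 * star U
  have sum_smul (z : n → ℂ) : ∑ a, z a • b a = U * Matrix.diagonal z * star U := by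
    have diagonal_eq : Matrix.diagonal z = ∑ a, z a • Matrix.single a a 1 := by
      simp [Matrix.smul_single, Matrix.sum_single_eq_diagonal]
    simp only [b, diagonal_eq, Finset.mul_sum, Finset.sum_mul, mul_smul_comm, smul_mul_assoc]
  rw [hA.spectral_theorem, Unitary.conjStarAlgAut_apply, ← sum_smul]
  refine diag_eq_of_forall_mem_box infinite_unitSphere_complex (fun z hz => ?_) _
  rw [sum_smul]
  have hU := hA.eigenvectorUnitary.2
  exact hT _ (mul_mem (mul_mem hU (diagonal_mem_unitaryGroup hz)) (Unitary.star_mem hU))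

theorem diag_eq_of_unitaryGroup
    (hT : ∀ u ∈ Matrix.unitaryGroup n ℂ, T (fun _ => u) = T' fun _ => u) (A : Matrix n n ℂ) :
    T (fun _ => A) = T' fun _ => A := by
  let b : Fin 2 → Matrix n n ℂ := ![realPart A, imaginaryPart A]
  have hA : A = ∑ a, ![1, Complex.I] a • b a := by
    simp [b, realPart_add_I_smul_imaginaryPart]
  rw [hA]
  refine diag_eq_of_forall_mem_box
    (Set.infinite_range_of_injective Complex.ofReal_injective) (fun z hz => ?_) _
  refine diag_eq_of_isHermitian hT (sum_mem (S := selfAdjoint (Matrix n n ℂ)) fun a _ => ?_)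
  obtain ⟨x, hx⟩ := hz a
  have hb : IsSelfAdjoint (b a) := by
    fin_cases a
    exacts [(realPart A).2, (imaginaryPart A).2]
  rw [← hx, Complex.coe_smul]
  exact (IsSelfAdjoint.all x).smul hb

end UnitarianTrick

section DoubleCentralizer

theorem exists_eq_lsmul_of_forall_commute {k A M : Type*} [CommSemiring k] [Ring A] [Algebra k A]
    [AddCommGroup M] [Module k M] [Module A M] [IsScalarTower k A M] [IsSemisimpleModule A M]
    [Module.Finite k M] (f : Module.End k M)
    (hf : ∀ g : Module.End A M, Commute f (g.restrictScalars k)) :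
    ∃ a : A, f = Algebra.lsmul k k M a := by
  have : Module.Finite (Module.End A M) M := Module.Finite.of_restrictScalars_finite k _ _
  let f' : Module.End (Module.End A M) M :=
    { f with map_smul' := fun g x => LinearMap.congr_fun (hf g) x }
  obtain ⟨a, ha⟩ := Module.Finite.toModuleEnd_moduleEnd_surjective f'
  exact ⟨a, LinearMap.ext fun x => (LinearMap.congr_fun ha x).symm⟩

open Representation in
theorem mem_span_range_of_forall_commute {k G V : Type*} [Field k] [Monoid G] [AddCommGroup V]
    [Module k V] [Module.Finite k V] (ρ : Representation k G V) [IsSemisimpleRepresentation ρ]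
    (f : Module.End k V)
    (hf : ∀ g : Module.End k V, (∀ s, Commute (ρ s) g) → Commute f g) :
    f ∈ Submodule.span k (Set.range ρ) := by
  have : IsSemisimpleModule (MonoidAlgebra k G) ρ.asModule :=
    (isSemisimpleRepresentation_iff_isSemisimpleModule_asModule ρ).1 inferInstance
  have commute_conj (g : Module.End (MonoidAlgebra k G) ρ.asModule) :
      Commute (ρ.asModuleEquiv.symm.conj f) (g.restrictScalars k) := by
    have hg : Commute f (ρ.asModuleEquiv.conj (g.restrictScalars k)) := by
      refine hf _ fun s => LinearMap.ext fun x => ?_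
      change ρ s (ρ.asModuleEquiv (g (ρ.asModuleEquiv.symm x))) =
        ρ.asModuleEquiv (g (ρ.asModuleEquiv.symm (ρ s x)))
      rw [asModuleEquiv_symm_map_rho, map_smul, asModuleEquiv_map_smul, asAlgebraHom_of]
    exact LinearMap.ext fun x => by
      simpa using congr(ρ.asModuleEquiv.symm ($hg.eq (ρ.asModuleEquiv x)))
  obtain ⟨a, ha⟩ := exists_eq_lsmul_of_forall_commute _ commute_conj
  have hfa : f = ρ.asAlgebraHom a := by
    ext x
    have := congr(ρ.asModuleEquiv ($ha (ρ.asModuleEquiv.symm x)))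
    simpa [asModuleEquiv_map_smul] using this
  rw [hfa, asAlgebraHom_def, MonoidAlgebra.lift_apply]
  exact Submodule.sum_mem _ fun s _ => Submodule.smul_mem _ _ (Submodule.subset_span ⟨s, rfl⟩)

end DoubleCentralizer

section TensorPower

open PiTensorProduct

theorem span_range_map_eq_top {R ι : Type*} [CommSemiring R] [Finite ι] {M N : ι → Type*}
    [∀ i, AddCommMonoid (M i)] [∀ i, Module R (M i)] [∀ i, Module.Free R (M i)]
    [∀ i, Module.Finite R (M i)]
    [∀ i, AddCommMonoid (N i)] [∀ i, Module R (N i)] [∀ i, Module.Free R (N i)]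
    [∀ i, Module.Finite R (N i)] :
    Submodule.span R (Set.range (map : (Π i, M i →ₗ[R] N i) → _)) = ⊤ := by
  classical
  have := Fintype.ofFinite ι
  let bM (i : ι) := Module.Free.chooseBasis R (M i)
  let bN (i : ι) := Module.Free.chooseBasis R (N i)
  rw [eq_top_iff,
    ← ((Basis.piTensorProduct bM).linearMap (Basis.piTensorProduct bN)).span_eq]
  refine Submodule.span_mono ?_
  rintro _ ⟨⟨p, q⟩, rfl⟩
  refine ⟨fun i => (bM i).linearMap (bN i) (p i, q i), (Basis.piTensorProduct bM).ext fun r => ?_⟩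
  rw [Module.Basis.linearMap_apply_apply]
  simp only [Module.Basis.linearMap_apply_apply, Basis.piTensorProduct_apply, map_tprod]
  split_ifs with h
  · simp [h]
  · obtain ⟨i, hi⟩ := Function.ne_iff.1 h
    exact (PiTensorProduct.tprod R).map_coord_zero i (if_neg hi)

/-- The representation of the symmetric group of `ι` on `V^{⊗ι}` permuting the tensor factors:
`σ` sends `⨂ i, v i` to `⨂ i, v (σ⁻¹ i)`. -/
noncomputable def permRep (R ι V : Type*) [CommSemiring R] [AddCommMonoid V] [Module R V] :
    Representation R (Equiv.Perm ι) (⨂[R] _ : ι, V) where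
  toFun σ := (reindex R (fun _ => V) σ).toLinearMap
  map_one' := by ext; simp [Equiv.Perm.one_def]
  map_mul' σ τ := by
    ext v
    simp only [LinearMap.compMultilinearMap_apply, Module.End.mul_apply, LinearEquiv.coe_coe,
      reindex_tprod]
    rfl

theorem permRep_tprod {R ι V : Type*} [CommSemiring R] [AddCommMonoid V] [Module R V]
    (σ : Equiv.Perm ι) (v : ι → V) :
    permRep R ι V σ (tprod R v) = tprod R fun i => v (σ⁻¹ i) :=
  reindex_tprod σ v

theorem linHom_permRep_map {R ι V : Type*} [CommSemiring R] [AddCommMonoid V] [Module R V]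
    (σ : Equiv.Perm ι) (A : ι → Module.End R V) :
    (permRep R ι V).linHom (permRep R ι V) σ (map A) = map fun i => A (σ⁻¹ i) := by
  refine PiTensorProduct.ext (MultilinearMap.ext fun (v : ι → V) => ?_)
  simp only [Representation.linHom_apply, LinearMap.compMultilinearMap_apply,
    LinearMap.comp_apply, permRep_tprod, map_tprod, Equiv.Perm.inv_def,
    Equiv.symm_symm, Equiv.apply_symm_apply]

variable {K ι V : Type*} [Field K] [Infinite K] [AddCommGroup V] [Module K V]
  {f : Module.End K (⨂[K] _ : ι, V)}

theorem commute_sum_perm_map [Fintype ι] [DecidableEq ι]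
    (hf : ∀ A : Module.End K V, Commute f (map fun _ => A)) (A : ι → Module.End K V) :
    Commute f (∑ σ : Equiv.Perm ι, map fun i => A (σ i)) := by
  let T := mapMultilinear K (fun _ : ι => V) fun _ => V
  have h := sum_perm_eq_of_diag_eq (T := (LinearMap.mulLeft K f).compMultilinearMap T)
    (T' := (LinearMap.mulRight K f).compMultilinearMap T) (fun A => hf A) A
  rw [commute_iff_eq, Finset.mul_sum, Finset.sum_mul]
  exact h

variable [Module.Finite K V]

theorem commute_sum_linHom_permRep [Fintype ι] [DecidableEq ι]
    (hf : ∀ A : Module.End K V, Commute f (map fun _ => A)) (g : Module.End K (⨂[K] _ : ι, V)) :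
    Commute f (∑ σ, (permRep K ι V).linHom (permRep K ι V) σ g) := by
  let S := ∑ σ, (permRep K ι V).linHom (permRep K ι V) σ
  have S_map (A : ι → Module.End K V) : S (map A) = ∑ σ : Equiv.Perm ι, map fun i => A (σ i) := by
    simp only [S, LinearMap.sum_apply, linHom_permRep_map]
    exact Equiv.sum_comp (Equiv.inv (Equiv.Perm ι)) fun σ => map fun i => A (σ i)
  have hS : LinearMap.mulLeft K f ∘ₗ S = LinearMap.mulRight K f ∘ₗ S :=
    LinearMap.ext_on_range span_range_map_eq_top fun A => by
      simpa only [LinearMap.comp_apply, LinearMap.mulLeft_apply, LinearMap.mulRight_apply,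
        S_map] using (commute_sum_perm_map hf A).eq
  simpa only [commute_iff_eq, S, LinearMap.comp_apply, LinearMap.mulLeft_apply,
    LinearMap.mulRight_apply, LinearMap.sum_apply] using congr($hS g)

theorem commute_of_commute_permRep [Finite ι] [NeZero (Nat.card (Equiv.Perm ι) : K)]
    (hf : ∀ A : Module.End K V, Commute f (map fun _ => A))
    {g : Module.End K (⨂[K] _ : ι, V)} (hg : ∀ σ, Commute (permRep K ι V σ) g) :
    Commute f g := by
  classical
  have := Fintype.ofFinite ι
  have conj_eq (σ : Equiv.Perm ι) : (permRep K ι V).linHom (permRep K ι V) σ g = g := by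
    rw [Representation.linHom_apply, ← Module.End.mul_eq_comp, ← Module.End.mul_eq_comp,
      ← mul_assoc, (hg σ).eq, mul_assoc, ← map_mul, mul_inv_cancel, map_one, mul_one]
  have h := commute_sum_linHom_permRep hf g
  simp only [conj_eq, Finset.sum_const, Finset.card_univ, ← Nat.card_eq_fintype_card,
    ← Nat.cast_smul_eq_nsmul K] at h
  exact (Commute.smul_right_iff₀ (NeZero.ne _)).1 h

theorem mem_span_range_permRep_of_commute_map [Finite ι] [NeZero (Nat.card (Equiv.Perm ι) : K)]
    (hf : ∀ A : Module.End K V, Commute f (map fun _ => A)) :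
    f ∈ Submodule.span K (Set.range (permRep K ι V)) :=
  mem_span_range_of_forall_commute _ _ fun _ hg => commute_of_commute_permRep hf hg

end TensorPower

end SchurWeyl

open SchurWeyl

theorem schur_weyl_commutant_of_unitary_general {ι n : Type*} [Finite ι] [Fintype n]
    [DecidableEq n] (f : Module.End ℂ (⨂[ℂ] _ : ι, (n → ℂ)))
    (hf : ∀ u ∈ Matrix.unitaryGroup n ℂ,
      Commute f (PiTensorProduct.map fun _ => Matrix.mulVecLin u)) :
    f ∈ Submodule.span ℂ (Set.range (permRep ℂ ι (n → ℂ))) := by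
  let T := (PiTensorProduct.mapMultilinear ℂ (fun _ : ι => n → ℂ) fun _ => n → ℂ).compLinearMap
    fun _ => Matrix.toLin'.toLinearMap
  have hT (A : Matrix n n ℂ) : Commute f (T fun _ => A) :=
    diag_eq_of_unitaryGroup (T := (LinearMap.mulLeft ℂ f).compMultilinearMap T)
      (T' := (LinearMap.mulRight ℂ f).compMultilinearMap T) (fun u hu => hf u hu) A
  exact mem_span_range_permRep_of_commute_map fun A => by
    simpa [T] using hT (LinearMap.toMatrix' A)

/-- **Schur–Weyl duality, commutant direction.** Every endomorphism of `(ℂ^n)^{⊗d}`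
commuting with `u^{⊗d}` for all unitary `u` is a linear combination of the permutation
operators `π(σ)`, `σ ∈ S_d`. -/
theorem schur_weyl_commutant_of_unitary
    (n d : ℕ) (hn : 1 ≤ n) (hd : 1 ≤ d)
    (f : (⨂[ℂ] _ : Fin d, (Fin n → ℂ)) →ₗ[ℂ] ⨂[ℂ] _ : Fin d, (Fin n → ℂ))
    (hf : ∀ u : Matrix.unitaryGroup (Fin n) ℂ,
      f ∘ₗ tensorPowMap n d (u : Matrix (Fin n) (Fin n) ℂ)
        = tensorPowMap n d (u : Matrix (Fin n) (Fin n) ℂ) ∘ₗ f) :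
    f ∈ Submodule.span ℂ {h | ∃ σ : Equiv.Perm (Fin d), h = permMap n d σ} := by
  have hperm : {h | ∃ σ : Equiv.Perm (Fin d), h = permMap n d σ} =
      Set.range (permRep ℂ (Fin d) (Fin n → ℂ)) :=
    Set.ext fun h => exists_congr fun σ => eq_comm
  exact hperm ▸ schur_weyl_commutant_of_unitary_general f fun u hu => hf ⟨u, hu⟩
end

section
/- Let n ≥ 1 and d ≥ 1, and let V = ℂ^n. Every ℂ-linear endomorphism of V^{⊗d} that commutes with the permutation operator π(σ) for every σ ∈ S_d is a ℂ-linear combination of the operators u^{⊗d} with u ∈ U(n). In other words, the commutant of the symmetric group action on V^{⊗d} equals the linear span of {u^{⊗d} : u ∈ U(n)}. -/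
open scoped TensorProduct

/-!
For a multilinear map `m` and a linear functional `φ`, the value `φ (m (x, …, x))` at
`x = ∑ k, t k • v k` is a polynomial in `t`; if it vanishes on a product of infinite sets, all its
values and all its coefficients vanish. Let `φ` run over the functionals killing a subspace `W`.

* Values: if `m (u, …, u) ∈ W` for unitary `u`, letting the eigenvalues leave the unit circle gives
  `m (A, …, A) ∈ W` for Hermitian `A`, and letting `a`, `b` leave the real line in `a • X + b • Y`
  with `X`, `Y` Hermitian gives it for every matrix.
* Coefficients: that of `∏ i, t i` is `∑ σ, m (v ∘ σ)`. Hence the sum of the `S_d`-conjugates of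
  `T₁ ⊗ ⋯ ⊗ T_d`, and so of any endomorphism, is in the span of the operators `T^{⊗d}`; an
  endomorphism commuting with `S_d` is the average of its conjugates.
-/

section DiagonalPolynomial

theorem sum_single_eq_sum_single_iff_bijective {ι : Type*} [Fintype ι] (r : ι → ι) :
    ∑ i, Finsupp.single (r i) (1 : ℕ) = ∑ i, Finsupp.single i 1 ↔ r.Bijective := by
  classical
  refine ⟨fun h => Finite.surjective_iff_bijective.mp fun k => ?_, fun hr =>
    hr.sum_comp fun i => Finsupp.single i 1⟩
  by_contra! hk
  simpa [Finsupp.finsetSum_apply, Finsupp.single_apply, hk] using DFunLike.congr_fun h k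

variable {ι κ R M : Type*} [Fintype ι] [DecidableEq ι] [Fintype κ] [AddCommMonoid M]

/-- The polynomial in the variables `X k`, `k : κ`, that expands `ψ (x, …, x)` for a multilinear
form `ψ` at the generic linear combination `x = ∑ k, X k • v k`. -/
noncomputable def diagonalPolynomial [CommSemiring R] [Module R M]
    (ψ : MultilinearMap R (fun _ : ι => M) R) (v : κ → M) : MvPolynomial κ R :=
  ∑ r : ι → κ, MvPolynomial.monomial (∑ i, Finsupp.single (r i) 1) (ψ fun i => v (r i))

theorem eval_diagonalPolynomial [CommSemiring R] [Module R M]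
    (ψ : MultilinearMap R (fun _ : ι => M) R) (v : κ → M) (t : κ → R) :
    MvPolynomial.eval t (diagonalPolynomial ψ v) = ψ fun _ => ∑ k, t k • v k := by
  simp only [diagonalPolynomial, ψ.map_sum, ψ.map_smul_univ, map_sum,
    MvPolynomial.monomial_sum_index]
  refine Finset.sum_congr rfl fun r _ => ?_
  simp [MvPolynomial.eval_monomial, mul_comm]

theorem coeff_diagonalPolynomial_sum_single [CommSemiring R] [Module R M]
    (ψ : MultilinearMap R (fun _ : ι => M) R) (v : ι → M) :
    (diagonalPolynomial ψ v).coeff (∑ i, Finsupp.single i 1) =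
      ∑ σ : Equiv.Perm ι, ψ fun i => v (σ i) := by
  classical
  simp only [diagonalPolynomial, MvPolynomial.coeff_sum, MvPolynomial.coeff_monomial,
    sum_single_eq_sum_single_iff_bijective]
  refine (Fintype.sum_of_injective (fun σ : Equiv.Perm ι => (σ : ι → ι)) DFunLike.coe_injective
    _ _ (fun r hr => if_neg fun hbij => hr ⟨Equiv.ofBijective r hbij, rfl⟩) fun σ => ?_).symm
  rw [if_pos σ.bijective]

theorem diagonalPolynomial_eq_zero [CommRing R] [IsDomain R] [Module R M]
    (ψ : MultilinearMap R (fun _ : ι => M) R) (v : κ → M)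
    {S : κ → Set R} (hS : ∀ k, (S k).Infinite)
    (h : ∀ t ∈ Set.pi Set.univ S, ψ (fun _ => ∑ k, t k • v k) = 0) :
    diagonalPolynomial ψ v = 0 :=
  MvPolynomial.funext_set S hS fun t ht => by rw [eval_diagonalPolynomial, h t ht, map_zero]

end DiagonalPolynomial

section MultilinearMap

variable {ι κ K M N : Type*} [Field K] [AddCommMonoid M] [Module K M]
  [AddCommGroup N] [Module K N]

theorem map_const_sum_smul_mem_of_forall_mem_pi [Finite ι] [Fintype κ]
    (m : MultilinearMap K (fun _ : ι => M) N) (W : Submodule K N) (v : κ → M)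
    {S : κ → Set K} (hS : ∀ k, (S k).Infinite)
    (h : ∀ t ∈ Set.pi Set.univ S, m (fun _ => ∑ k, t k • v k) ∈ W) (t : κ → K) :
    m (fun _ => ∑ k, t k • v k) ∈ W := by
  classical
  have := Fintype.ofFinite ι
  by_contra hmem
  obtain ⟨φ, hφ, hW⟩ := Submodule.exists_le_ker_of_notMem hmem
  have hzero : diagonalPolynomial (φ.compMultilinearMap m) v = 0 :=
    diagonalPolynomial_eq_zero _ v hS fun t ht => hW (h t ht)
  apply hφ
  simpa [hzero] using (eval_diagonalPolynomial (φ.compMultilinearMap m) v t).symm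

theorem sum_map_perm_mem_of_forall_map_const_mem [Fintype ι] [DecidableEq ι] [Infinite K]
    (m : MultilinearMap K (fun _ : ι => M) N) (W : Submodule K N)
    (h : ∀ x, m (fun _ => x) ∈ W) (v : ι → M) :
    ∑ σ : Equiv.Perm ι, m (fun i => v (σ i)) ∈ W := by
  by_contra hmem
  obtain ⟨φ, hφ, hW⟩ := Submodule.exists_le_ker_of_notMem hmem
  have hzero : diagonalPolynomial (φ.compMultilinearMap m) v = 0 :=
    diagonalPolynomial_eq_zero _ v (fun _ => Set.infinite_univ) fun t _ => hW (h _)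
  apply hφ
  simpa [hzero] using (coeff_diagonalPolynomial_sum_single (φ.compMultilinearMap m) v).symm

end MultilinearMap

section UnitaryGroup

theorem infinite_unitary_complex : (unitary ℂ : Set ℂ).Infinite := by
  have hsphere : (unitary ℂ : Set ℂ) = Metric.sphere 0 1 := by
    ext z
    rw [SetLike.mem_coe, Unitary.mem_iff_self_mul_star, mem_sphere_zero_iff_norm,
      ← starRingEnd_apply, Complex.mul_conj']
    exact_mod_cast pow_eq_one_iff_of_nonneg (norm_nonneg z) two_ne_zero
  rw [hsphere]
  exact (isPreconnected_sphere (by simp [Complex.rank_real_complex]) 0 1).infinite_of_nontrivial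
    ⟨1, by simp, -1, by simp, by norm_num⟩

variable {ι κ N : Type*} [Finite ι] [Fintype κ] [DecidableEq κ] [AddCommGroup N] [Module ℂ N]

theorem diagonal_mem_unitaryGroup {α : Type*} [CommRing α] [StarRing α] {t : κ → α}
    (ht : ∀ k, t k ∈ unitary α) : Matrix.diagonal t ∈ Matrix.unitaryGroup κ α := by
  rw [Matrix.mem_unitaryGroup_iff, Matrix.star_eq_conjTranspose, Matrix.diagonal_conjTranspose,
    Matrix.diagonal_mul_diagonal, ← Matrix.diagonal_one]
  exact congrArg Matrix.diagonal (funext fun k => Unitary.mul_star_self_of_mem (ht k))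

theorem map_const_mem_of_isHermitian (m : MultilinearMap ℂ (fun _ : ι => Matrix κ κ ℂ) N)
    (W : Submodule ℂ N) (hW : ∀ u ∈ Matrix.unitaryGroup κ ℂ, m (fun _ => u) ∈ W)
    {A : Matrix κ κ ℂ} (hA : A.IsHermitian) : m (fun _ => A) ∈ W := by
  let Φ := Unitary.conjStarAlgAut ℂ (Matrix κ κ ℂ) hA.eigenvectorUnitary
  have hsum (t : κ → ℂ) : ∑ k, t k • Φ (Matrix.single k k 1) = Φ (Matrix.diagonal t) := by
    simp only [← map_smul, ← map_sum, Matrix.smul_single, smul_eq_mul, mul_one,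
      Matrix.sum_single_eq_diagonal]
  rw [hA.spectral_theorem, ← hsum]
  refine map_const_sum_smul_mem_of_forall_mem_pi m W _ (fun _ => infinite_unitary_complex)
    (fun t ht => ?_) _
  rw [hsum]
  exact hW _ (Unitary.map_mem Φ (diagonal_mem_unitaryGroup fun k => ht k trivial))

theorem map_const_mem_of_forall_mem_unitaryGroup
    (m : MultilinearMap ℂ (fun _ : ι => Matrix κ κ ℂ) N) (W : Submodule ℂ N)
    (hW : ∀ u ∈ Matrix.unitaryGroup κ ℂ, m (fun _ => u) ∈ W) (A : Matrix κ κ ℂ) :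
    m (fun _ => A) ∈ W := by
  have hA : ∑ k, ![1, Complex.I] k • ![(realPart A : Matrix κ κ ℂ), imaginaryPart A] k = A := by
    simp [realPart_add_I_smul_imaginaryPart]
  rw [← hA]
  refine map_const_sum_smul_mem_of_forall_mem_pi m W _
    (fun _ => Set.infinite_range_of_injective Complex.ofReal_injective) (fun t ht => ?_) _
  have hreal (k : Fin 2) : IsSelfAdjoint (t k) := by
    obtain ⟨x, hx⟩ := ht k trivial
    exact hx ▸ Complex.conj_ofReal x
  refine map_const_mem_of_isHermitian m W hW ?_
  rw [Fin.sum_univ_two]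
  exact ((hreal 0).smul (realPart A).2).add ((hreal 1).smul (imaginaryPart A).2)

end UnitaryGroup

section Commutant

open PiTensorProduct

theorem span_range_piTensorProduct_map_eq_top {ι R : Type*} {κ κ' V V' : ι → Type*} [Finite ι]
    [∀ i, Finite (κ i)] [∀ i, Finite (κ' i)] [CommSemiring R]
    [∀ i, AddCommMonoid (V i)] [∀ i, Module R (V i)]
    [∀ i, AddCommMonoid (V' i)] [∀ i, Module R (V' i)]
    (b : ∀ i, Module.Basis (κ i) R (V i)) (b' : ∀ i, Module.Basis (κ' i) R (V' i)) :
    Submodule.span R (Set.range fun T : ∀ i, V i →ₗ[R] V' i => PiTensorProduct.map T) = ⊤ := by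
  classical
  have := Fintype.ofFinite ι
  have := fun i => Fintype.ofFinite (κ i)
  have := fun i => Fintype.ofFinite (κ' i)
  let B := (Basis.piTensorProduct b).linearMap (Basis.piTensorProduct b')
  have hB (p : ∀ i, κ' i) (q : ∀ i, κ i) :
      PiTensorProduct.map (fun i => (b i).linearMap (b' i) (p i, q i)) = B (p, q) := by
    refine (Basis.piTensorProduct b).ext fun r => ?_
    rw [Module.Basis.linearMap_apply_apply]
    simp only [Basis.piTensorProduct_apply, map_tprod, Module.Basis.linearMap_apply_apply]
    split_ifs with hqr
    · simp [← hqr]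
    · obtain ⟨i, hi⟩ := Function.ne_iff.mp hqr
      exact (PiTensorProduct.tprod R).map_coord_zero i (if_neg hi)
  rw [eq_top_iff, ← B.span_eq]
  refine Submodule.span_mono ?_
  rintro _ ⟨⟨p, q⟩, rfl⟩
  exact ⟨_, hB p q⟩

theorem reindex_conj_map {ι R V : Type*} [CommSemiring R] [AddCommMonoid V] [Module R V]
    (σ : Equiv.Perm ι) (T : ι → V →ₗ[R] V) :
    (reindex R (fun _ => V) σ).conj (PiTensorProduct.map T) =
      PiTensorProduct.map fun i => T (σ.symm i) := by
  rw [LinearEquiv.conj_apply, ← map_comp_reindex_eq, LinearMap.comp_assoc,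
    LinearEquiv.comp_symm, LinearMap.comp_id]

variable {ι K V : Type*} [Fintype ι] [Field K] [Infinite K] [AddCommGroup V] [Module K V]

theorem sum_reindex_conj_map_mem_span [DecidableEq ι] (T : ι → V →ₗ[K] V) :
    ∑ σ : Equiv.Perm ι, (reindex K (fun _ => V) σ).conj (PiTensorProduct.map T) ∈
      Submodule.span K (Set.range fun T : V →ₗ[K] V => PiTensorProduct.map fun _ : ι => T) := by
  simp only [reindex_conj_map]
  rw [← Equiv.sum_comp (Equiv.inv (Equiv.Perm ι))]
  exact sum_map_perm_mem_of_forall_map_const_mem (mapMultilinear K (fun _ => V) fun _ => V) _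
    (fun T => Submodule.subset_span (Set.mem_range_self T)) T

variable [FiniteDimensional K V]

theorem sum_reindex_conj_mem_span [DecidableEq ι] (f : (⨂[K] _ : ι, V) →ₗ[K] ⨂[K] _ : ι, V) :
    ∑ σ : Equiv.Perm ι, (reindex K (fun _ => V) σ).conj f ∈
      Submodule.span K (Set.range fun T : V →ₗ[K] V => PiTensorProduct.map fun _ : ι => T) := by
  let b (_ : ι) := Module.finBasis K V
  have hf : f ∈ Submodule.span K (Set.range fun T : ι → V →ₗ[K] V => PiTensorProduct.map T) :=
    span_range_piTensorProduct_map_eq_top b b ▸ Submodule.mem_top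
  induction hf using Submodule.span_induction with
  | mem f hf =>
    obtain ⟨T, rfl⟩ := hf
    exact sum_reindex_conj_map_mem_span T
  | zero => simp
  | add f g _ _ hf hg =>
    simpa only [map_add, Finset.sum_add_distrib] using Submodule.add_mem _ hf hg
  | smul c f _ hf => simpa only [map_smul, ← Finset.smul_sum] using Submodule.smul_mem _ c hf

theorem mem_span_range_map_const_of_comm_reindex (hι : ((Fintype.card ι).factorial : K) ≠ 0)
    (f : (⨂[K] _ : ι, V) →ₗ[K] ⨂[K] _ : ι, V)
    (hf : ∀ σ : Equiv.Perm ι, f ∘ₗ (reindex K (fun _ => V) σ).toLinearMap =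
      (reindex K (fun _ => V) σ).toLinearMap ∘ₗ f) :
    f ∈ Submodule.span K
      (Set.range fun T : V →ₗ[K] V => PiTensorProduct.map fun _ : ι => T) := by
  classical
  have hconj (σ : Equiv.Perm ι) : (reindex K (fun _ => V) σ).conj f = f := by
    rw [LinearEquiv.conj_apply, ← hf, LinearMap.comp_assoc, LinearEquiv.comp_symm,
      LinearMap.comp_id]
  have hsum := sum_reindex_conj_mem_span f
  simp only [hconj, Finset.sum_const, Finset.card_univ, Fintype.card_perm] at hsum
  rwa [← Nat.cast_smul_eq_nsmul K, Submodule.smul_mem_iff _ hι] at hsum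

end Commutant

theorem commutant_of_symmetric_group_eq_span_unitary_tensor_powers_general
    {ι κ : Type*} [Finite ι] [Fintype κ] [DecidableEq κ]
    (f : (⨂[ℂ] _ : ι, (κ → ℂ)) →ₗ[ℂ] ⨂[ℂ] _ : ι, (κ → ℂ))
    (hf : ∀ σ : Equiv.Perm ι,
      f ∘ₗ (PiTensorProduct.reindex ℂ (fun _ => κ → ℂ) σ).toLinearMap =
        (PiTensorProduct.reindex ℂ (fun _ => κ → ℂ) σ).toLinearMap ∘ₗ f) :
    f ∈ Submodule.span ℂ {h | ∃ u : Matrix.unitaryGroup κ ℂ,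
      h = PiTensorProduct.map fun _ => Matrix.mulVecLin (u : Matrix κ κ ℂ)} := by
  have := Fintype.ofFinite ι
  have hfact : ((Fintype.card ι).factorial : ℂ) ≠ 0 :=
    Nat.cast_ne_zero.mpr (Nat.factorial_ne_zero _)
  refine Submodule.span_le.mpr ?_ (mem_span_range_map_const_of_comm_reindex hfact f hf)
  rintro _ ⟨T, rfl⟩
  let tensorPow : MultilinearMap ℂ (fun _ : ι => Matrix κ κ ℂ)
      ((⨂[ℂ] _ : ι, (κ → ℂ)) →ₗ[ℂ] ⨂[ℂ] _ : ι, (κ → ℂ)) :=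
    (PiTensorProduct.mapMultilinear ℂ _ _).compLinearMap fun _ => Matrix.toLin'.toLinearMap
  have hT : tensorPow (fun _ => LinearMap.toMatrix' T) = PiTensorProduct.map fun _ => T := by
    simp [tensorPow]
  simp only [SetLike.mem_coe, ← hT]
  refine map_const_mem_of_forall_mem_unitaryGroup
    (N := (⨂[ℂ] _ : ι, (κ → ℂ)) →ₗ[ℂ] ⨂[ℂ] _ : ι, (κ → ℂ)) tensorPow _ (fun u hu => ?_) _
  exact Submodule.subset_span ⟨⟨u, hu⟩, rfl⟩

/-- **Schur–Weyl duality, the other direction.** Every endomorphism of `(ℂ^n)^{⊗d}`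
commuting with all the permutation operators `π(σ)`, `σ ∈ S_d`, is a linear combination
of the operators `u^{⊗d}` with `u ∈ U(n)`. -/
theorem commutant_of_symmetric_group_eq_span_unitary_tensor_powers
    (n d : ℕ) (hn : 1 ≤ n) (hd : 1 ≤ d)
    (f : (⨂[ℂ] _ : Fin d, (Fin n → ℂ)) →ₗ[ℂ] ⨂[ℂ] _ : Fin d, (Fin n → ℂ))
    (hf : ∀ σ : Equiv.Perm (Fin d), f ∘ₗ permMap n d σ = permMap n d σ ∘ₗ f) :
    f ∈ Submodule.span ℂ
      {h | ∃ u : Matrix.unitaryGroup (Fin n) ℂ,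
        h = tensorPowMap n d (u : Matrix (Fin n) (Fin n) ℂ)} :=
  commutant_of_symmetric_group_eq_span_unitary_tensor_powers_general f hf
end
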